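/- arXiv:2203.12140 — 4 statements merged into one kernel-verified Lean document; each statement's English description precedes it below -/
import Mathlib

section
/- If [(X,ω);(ν,Y)] is a balanced system with respect to [(X′,X″);(Y″,Y′)] in an abelian category A, then (X,Y) is a balanced pair with respect to (L̄_X(X′,X″), R̄^Y(Y″,Y′)). -/
/-!
Let `M ∈ L_X(X', X'')` and let `R` be a proper left `𝒳`-resolution of `M` with all kernels in `X'`.
Since `𝒳` generates `X''`, and `M` and the kernels lie in `X''`, properness forces the augmented
complex to be exact, so it splices short exact sequences `0 → K → A → Q → 0` with `K ∈ X'` and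
`Q ∈ X''`. It stays exact under `Hom(-, B)` as soon as every `K ⟶ B` extends to `A`. For `B ∈ 𝒴`
choose `0 → B' → V → B → 0` with `V ∈ ν` and `B' ∈ 𝒴`: because `Ext¹(K, B') = 0` the map lifts to
`K ⟶ V`, and because `Ext¹(Q, V) = 0` the lift extends to `A ⟶ V`; compose with `V ⟶ B`
(`extend_of_relGenerator`, `LeftRes.isCoacyclic_of_kernel_mem`).

If instead `M ∈ 𝒳`, the trivial resolution is not available, since `𝒳` need not contain a zero
object. But `M ∈ X'' ⊆ LPRes 𝒳`, and a proper left `𝒳`-resolution of an object of `𝒳` is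
contractible, hence stays exact under every `Hom(-, B)` (`LeftRes.isCoacyclic_of_mem`).

The assertions about right resolutions are dual. They are proved directly rather than in the
opposite category, which would require transporting `HasExt` and the vanishing of `Ext¹`.
-/

open CategoryTheory CategoryTheory.Limits

universe w w' v u

namespace BalancedSystems

variable {D : Type u} [Category.{v} D] [Abelian D]

/-- A class of objects is closed under isomorphisms. -/
def IsoClosed (X : Set D) : Prop := ∀ ⦃A B : D⦄, (A ≅ B) → A ∈ X → B ∈ X

/-- `f : A ⟶ B` and `g : B ⟶ E` form a short exact sequence `0 → A → B → E → 0`. -/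
def IsSES {A B E : D} (f : A ⟶ B) (g : B ⟶ E) : Prop :=
  ∃ w : f ≫ g = 0, (ShortComplex.mk f g w).ShortExact

/-- A class is closed under extensions. -/
def ExtensionClosed (X : Set D) : Prop :=
  ∀ ⦃A E B : D⦄ (f : A ⟶ E) (g : E ⟶ B), A ∈ X → B ∈ X → IsSES f g → E ∈ X

/-- A class is closed under direct summands. -/
def SummandClosed (X : Set D) : Prop :=
  ∀ ⦃A B : D⦄ (i : A ⟶ B) (r : B ⟶ A), i ≫ r = 𝟙 A → B ∈ X → A ∈ X

open ZeroObject in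
/-- A class is pointed, i.e. contains the zero object. -/
def Pointed (X : Set D) : Prop := (0 : D) ∈ X

/-- A class is closed under finite coproducts. -/
def FinCoprodClosed (X : Set D) : Prop :=
  Pointed X ∧ ∀ ⦃A B : D⦄, A ∈ X → B ∈ X → (A ⊞ B) ∈ X

/-- `X` is a generator in `X''`: every object of `X''` is an epimorphic image of an object of `X`. -/
def GeneratorIn (X X'' : Set D) : Prop :=
  ∀ M ∈ X'', ∃ A ∈ X, ∃ p : A ⟶ M, Epi p

/-- `Y` is a cogenerator in `Y''`. -/
def CogeneratorIn (Y Y'' : Set D) : Prop :=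
  ∀ N ∈ Y'', ∃ B ∈ Y, ∃ j : N ⟶ B, Mono j

/-- `ω` is a relative quasi-cogenerator in `X`. -/
def RelQuasiCogenerator (ω X : Set D) : Prop :=
  ∀ M ∈ X, ∃ W ∈ ω, ∃ M' ∈ X, ∃ (f : M ⟶ W) (g : W ⟶ M'), IsSES f g

/-- `ω` is a relative cogenerator in `X`. -/
def RelCogenerator (ω X : Set D) : Prop :=
  ω ⊆ X ∧ RelQuasiCogenerator ω X

/-- `ν` is a relative quasi-generator in `Y`. -/
def RelQuasiGenerator (ν Y : Set D) : Prop :=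
  ∀ N ∈ Y, ∃ V ∈ ν, ∃ N' ∈ Y, ∃ (f : N' ⟶ V) (g : V ⟶ N), IsSES f g

/-- `ν` is a relative generator in `Y`. -/
def RelGenerator (ν Y : Set D) : Prop :=
  ν ⊆ Y ∧ RelQuasiGenerator ν Y

/-- A (not necessarily exact) left resolution `⋯ → obj 1 → obj 0 → M → 0`. -/
structure LeftRes (M : D) : Type (max u v) where
  obj : ℕ → D
  d : ∀ n : ℕ, obj (n+1) ⟶ obj n
  aug : obj 0 ⟶ M
  dd : ∀ n : ℕ, d (n+1) ≫ d n = 0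
  daug : d 0 ≫ aug = 0

namespace LeftRes

variable {M : D} (R : LeftRes M)

/-- All terms of the resolution belong to the class `X`. -/
def InClass (X : Set D) : Prop := ∀ n, R.obj n ∈ X

/-- The resolution is `Hom(X,-)`-acyclic, i.e. proper. -/
def IsProper (X : Set D) : Prop :=
  ∀ A ∈ X,
    (∀ f : A ⟶ M, ∃ g : A ⟶ R.obj 0, g ≫ R.aug = f) ∧
    (∀ f : A ⟶ R.obj 0, f ≫ R.aug = 0 → ∃ g : A ⟶ R.obj 1, g ≫ R.d 0 = f) ∧
    (∀ (n : ℕ) (f : A ⟶ R.obj (n+1)), f ≫ R.d n = 0 → ∃ g : A ⟶ R.obj (n+2), g ≫ R.d (n+1) = f)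

/-- The resolution (with its augmentation) is `Hom(-,Y)`-acyclic. -/
def IsCoacyclic (Y : Set D) : Prop :=
  ∀ B ∈ Y,
    (∀ u : M ⟶ B, R.aug ≫ u = 0 → u = 0) ∧
    (∀ u : R.obj 0 ⟶ B, R.d 0 ≫ u = 0 → ∃ v : M ⟶ B, R.aug ≫ v = u) ∧
    (∀ (n : ℕ) (u : R.obj (n+1) ⟶ B), R.d (n+1) ≫ u = 0 → ∃ v : R.obj n ⟶ B, R.d n ≫ v = u)

/-- The augmented complex `⋯ → obj 1 → obj 0 → M → 0` is exact. -/
def IsExactRes : Prop :=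
  Epi R.aug ∧ (ShortComplex.mk (R.d 0) R.aug R.daug).Exact ∧
    ∀ n : ℕ, (ShortComplex.mk (R.d (n+1)) (R.d n) (R.dd n)).Exact

/-- The resolution is admissible: `obj 1 → obj 0 → M → 0` is exact. -/
def IsAdmissible : Prop :=
  Epi R.aug ∧ (ShortComplex.mk (R.d 0) R.aug R.daug).Exact

end LeftRes

/-- The class of objects admitting a proper left `X`-resolution. -/
def LPRes (X : Set D) : Set D :=
  {M | ∃ R : LeftRes M, R.InClass X ∧ R.IsProper X}

/-- A (not necessarily exact) right resolution `0 → N → obj 0 → obj 1 → ⋯`. -/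
structure RightRes (N : D) : Type (max u v) where
  obj : ℕ → D
  d : ∀ n : ℕ, obj n ⟶ obj (n+1)
  aug : N ⟶ obj 0
  dd : ∀ n : ℕ, d n ≫ d (n+1) = 0
  daug : aug ≫ d 0 = 0

namespace RightRes

variable {N : D} (S : RightRes N)

def InClass (Y : Set D) : Prop := ∀ n, S.obj n ∈ Y

/-- The resolution is `Hom(-,Y)`-acyclic, i.e. proper. -/
def IsProper (Y : Set D) : Prop :=
  ∀ B ∈ Y,
    (∀ f : N ⟶ B, ∃ g : S.obj 0 ⟶ B, S.aug ≫ g = f) ∧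
    (∀ u : S.obj 0 ⟶ B, S.aug ≫ u = 0 → ∃ v : S.obj 1 ⟶ B, S.d 0 ≫ v = u) ∧
    (∀ (n : ℕ) (u : S.obj (n+1) ⟶ B), S.d n ≫ u = 0 → ∃ v : S.obj (n+2) ⟶ B, S.d (n+1) ≫ v = u)

/-- The resolution (with its augmentation) is `Hom(X,-)`-acyclic. -/
def IsCoacyclic (X : Set D) : Prop :=
  ∀ A ∈ X,
    (∀ u : A ⟶ N, u ≫ S.aug = 0 → u = 0) ∧
    (∀ u : A ⟶ S.obj 0, u ≫ S.d 0 = 0 → ∃ v : A ⟶ N, v ≫ S.aug = u) ∧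
    (∀ (n : ℕ) (u : A ⟶ S.obj (n+1)), u ≫ S.d (n+1) = 0 → ∃ v : A ⟶ S.obj n, v ≫ S.d n = u)

/-- The augmented complex `0 → N → obj 0 → obj 1 → ⋯` is exact. -/
def IsExactRes : Prop :=
  Mono S.aug ∧ (ShortComplex.mk S.aug (S.d 0) S.daug).Exact ∧
    ∀ n : ℕ, (ShortComplex.mk (S.d n) (S.d (n+1)) (S.dd n)).Exact

/-- The resolution is admissible: `0 → N → obj 0 → obj 1` is exact. -/
def IsAdmissible : Prop :=
  Mono S.aug ∧ (ShortComplex.mk S.aug (S.d 0) S.daug).Exact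

end RightRes

/-- The class of objects admitting a proper right `Y`-resolution. -/
def RPRes (Y : Set D) : Set D :=
  {N | ∃ S : RightRes N, S.InClass Y ∧ S.IsProper Y}

/-- `(X,Y)` is a balanced pair with respect to `(Xt,Yt)`. -/
def IsBalancedPair (X Y Xt Yt : Set D) : Prop :=
  X ⊆ Xt ∧ Xt ⊆ LPRes X ∧ Y ⊆ Yt ∧ Yt ⊆ RPRes Y ∧
  (∀ M ∈ Xt, ∃ R : LeftRes M, R.InClass X ∧ R.IsProper X ∧ R.IsCoacyclic Y) ∧
  (∀ N ∈ Yt, ∃ S : RightRes N, S.InClass Y ∧ S.IsProper Y ∧ S.IsCoacyclic X)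

/-- `(X,Y)` is an admissible balanced pair with respect to `(Xt,Yt)`. -/
def IsAdmissibleBalancedPair (X Y Xt Yt : Set D) : Prop :=
  X ⊆ Xt ∧ Xt ⊆ LPRes X ∧ Y ⊆ Yt ∧ Yt ⊆ RPRes Y ∧
  (∀ M ∈ Xt, ∃ R : LeftRes M, R.InClass X ∧ R.IsProper X ∧ R.IsCoacyclic Y ∧ R.IsAdmissible) ∧
  (∀ N ∈ Yt, ∃ S : RightRes N, S.InClass Y ∧ S.IsProper Y ∧ S.IsCoacyclic X ∧ S.IsAdmissible)

/-- Objects of left `X`-resolution dimension at most `n`. -/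
def ResDimLE (X : Set D) : ℕ → Set D
  | 0 => X
  | (n+1) => {M | ∃ K ∈ ResDimLE X n, ∃ A ∈ X, ∃ (f : K ⟶ A) (g : A ⟶ M), IsSES f g}

/-- `X^∧` : objects of finite left `X`-resolution dimension. -/
def ResHat (X : Set D) : Set D := {M | ∃ n, M ∈ ResDimLE X n}

/-- Objects of right `X`-resolution dimension at most `n`. -/
def CoresDimLE (X : Set D) : ℕ → Set D
  | 0 => X
  | (n+1) => {M | ∃ A ∈ X, ∃ K ∈ CoresDimLE X n, ∃ (f : M ⟶ A) (g : A ⟶ K), IsSES f g}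

/-- `X^∨` : objects of finite right `X`-resolution dimension. -/
def CoresVee (X : Set D) : Set D := {M | ∃ n, M ∈ CoresDimLE X n}

section Ext

variable [HasExt.{w} D]

/-- `Ext^i (A, B) = 0`. -/
def ExtZero (A B : D) (i : ℕ) : Prop := Subsingleton (Abelian.Ext.{w} A B i)

/-- `X^⊥`: all higher Ext's from objects of `X` vanish. -/
def ExtPerp (X : Set D) : Set D :=
  {N | ∀ A ∈ X, ∀ i : ℕ, 1 ≤ i → ExtZero.{w} A N i}

/-- `^⊥Y`: all higher Ext's into objects of `Y` vanish. -/
def PerpExt (Y : Set D) : Set D :=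
  {M | ∀ B ∈ Y, ∀ i : ℕ, 1 ≤ i → ExtZero.{w} M B i}

/-- `[(X,ω);(ν,Y)]` is a finite balanced system. -/
structure IsFiniteBalancedSystem (X ω ν Y : Set D) : Prop where
  pointedX : Pointed X
  extClosedX : ExtensionClosed X
  pointedY : Pointed Y
  extClosedY : ExtensionClosed Y
  relCogenOmega : RelCogenerator ω X
  idXomega : ∀ A ∈ X, ∀ W ∈ ω, ∀ i : ℕ, 1 ≤ i → ExtZero.{w} A W i
  relGenNu : RelGenerator ν Y
  pdYnu : ∀ V ∈ ν, ∀ B ∈ Y, ∀ i : ℕ, 1 ≤ i → ExtZero.{w} V B i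
  ext1_hatX_nu : ∀ M ∈ ResHat X, ∀ V ∈ ν, ExtZero.{w} M V 1
  ext1_hatOmega_Y : ∀ H ∈ ResHat ω, ∀ B ∈ Y, ExtZero.{w} H B 1
  ext1_omega_veeY : ∀ W ∈ ω, ∀ N ∈ CoresVee Y, ExtZero.{w} W N 1
  ext1_X_veeNu : ∀ A ∈ X, ∀ L ∈ CoresVee ν, ExtZero.{w} A L 1

/-- `[(X,ω);(ν,Y)]` is a strongly finite balanced system. -/
structure IsStronglyFiniteBalancedSystem (X ω ν Y : Set D)
    extends IsFiniteBalancedSystem.{w} X ω ν Y : Prop where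
  pdYomega : ∀ W ∈ ω, ∀ B ∈ Y, ∀ i : ℕ, 1 ≤ i → ExtZero.{w} W B i
  idXnu : ∀ A ∈ X, ∀ V ∈ ν, ∀ i : ℕ, 1 ≤ i → ExtZero.{w} A V i

end Ext

end BalancedSystems
namespace BalancedSystems

variable {D : Type u} [Category.{v} D] [Abelian D]

/-- A bounded below complex `⋯ → M 2 → M 1 → M 0 → 0`, where `M 0` plays the
role of the `(-1)`-st term `M₋₁`. -/
structure BBComplex (D : Type u) [Category.{v} D] [Abelian D] : Type (max u v) where
  M : ℕ → D
  d : ∀ n : ℕ, M (n+1) ⟶ M n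
  dd : ∀ n : ℕ, d (n+1) ≫ d n = 0

/-- A bounded below complex is `Hom(X,-)`-acyclic. -/
def BBComplex.HomAcyclic (X : Set D) (K : BBComplex D) : Prop :=
  ∀ A ∈ X,
    (∀ f : A ⟶ K.M 0, ∃ g : A ⟶ K.M 1, g ≫ K.d 0 = f) ∧
    (∀ (n : ℕ) (f : A ⟶ K.M (n+1)), f ≫ K.d n = 0 →
      ∃ g : A ⟶ K.M (n+2), g ≫ K.d (n+1) = f)

/-- A short complex `Z → Mo → Z'` (i.e. `0 → Z → Mo → Z' → 0`) is
`Hom(X,-)`-acyclic. -/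
def ShortHomAcyclic (X : Set D) {Z Mo Z' : D} (ι : Z ⟶ Mo) (p : Mo ⟶ Z') : Prop :=
  ∀ A ∈ X,
    (∀ u : A ⟶ Z, u ≫ ι = 0 → u = 0) ∧
    (∀ u : A ⟶ Mo, u ≫ p = 0 → ∃ v : A ⟶ Z, v ≫ ι = u) ∧
    (∀ u : A ⟶ Z', ∃ v : A ⟶ Mo, v ≫ p = u)

namespace LeftRes

variable {M : D} (R : LeftRes M)

/-- Precomposition with the differential, as a morphism of abelian groups
`Hom(obj n, N) →+ Hom(obj (n+1), N)`. -/
def precompHom (N : D) (n : ℕ) : (R.obj n ⟶ N) →+ (R.obj (n+1) ⟶ N) :=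
  AddMonoidHom.mk' (fun g => R.d n ≫ g) (by intro a b; simp)

/-- Cocycles of the complex `Hom(R, N)` in degree `n`. -/
def cocycles (N : D) (n : ℕ) : AddSubgroup (R.obj n ⟶ N) := (R.precompHom N n).ker

/-- The relative extension groups `Ext̲ⁱ_X(M,N)` computed from the proper left
`X`-resolution `R` of `M`: the `i`-th cohomology of `Hom(R, N)`. -/
def ExtGrp (N : D) : ℕ → Type v
  | 0 => R.cocycles N 0
  | (n+1) => R.cocycles N (n+1) ⧸
      ((R.precompHom N n).range.addSubgroupOf (R.cocycles N (n+1)))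

noncomputable instance (N : D) : ∀ i, AddCommGroup (R.ExtGrp N i)
  | 0 => inferInstanceAs (AddCommGroup (R.cocycles N 0))
  | (n+1) => inferInstanceAs (AddCommGroup (R.cocycles N (n+1) ⧸
      ((R.precompHom N n).range.addSubgroupOf (R.cocycles N (n+1)))))

/-- Functoriality of `Ext̲⁰_X(M,-)`: postcomposition on `0`-cocycles. -/
def ext0Map {N N' : D} (g : N ⟶ N') (x : R.ExtGrp N 0) : R.ExtGrp N' 0 :=
  (⟨(x : R.cocycles N 0).1 ≫ g, by
      have hx := (x : R.cocycles N 0).2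
      simp only [cocycles, AddMonoidHom.mem_ker, precompHom, AddMonoidHom.mk'_apply] at hx ⊢
      rw [← Category.assoc, hx, zero_comp]⟩ : R.cocycles N' 0)

end LeftRes

namespace RightRes

variable {N : D} (S : RightRes N)

/-- Postcomposition with the differential, as a morphism of abelian groups
`Hom(M, obj n) →+ Hom(M, obj (n+1))`. -/
def postcompHom (M : D) (n : ℕ) : (M ⟶ S.obj n) →+ (M ⟶ S.obj (n+1)) :=
  AddMonoidHom.mk' (fun g => g ≫ S.d n) (by intro a b; simp)

/-- Cocycles of the complex `Hom(M, S)` in degree `n`. -/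
def cocycles (M : D) (n : ℕ) : AddSubgroup (M ⟶ S.obj n) := (S.postcompHom M n).ker

/-- The relative extension groups `Ext̄ⁱ_Y(M,N)` computed from the proper right
`Y`-resolution `S` of `N`: the `i`-th cohomology of `Hom(M, S)`. -/
def ExtGrp (M : D) : ℕ → Type v
  | 0 => S.cocycles M 0
  | (n+1) => S.cocycles M (n+1) ⧸
      ((S.postcompHom M n).range.addSubgroupOf (S.cocycles M (n+1)))

noncomputable instance (M : D) : ∀ i, AddCommGroup (S.ExtGrp M i)
  | 0 => inferInstanceAs (AddCommGroup (S.cocycles M 0))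
  | (n+1) => inferInstanceAs (AddCommGroup (S.cocycles M (n+1) ⧸
      ((S.postcompHom M n).range.addSubgroupOf (S.cocycles M (n+1)))))

end RightRes

section ChainComplexes

/-- The class of complexes all of whose terms lie in `X`. -/
def chClass (X : Set D) : Set (ChainComplex D ℤ) := {K | ∀ n : ℤ, K.X n ∈ X}

/-- `ν̃` : the class of exact complexes all of whose cycle objects lie in `ν`. -/
noncomputable def tildeClass (ν : Set D) : Set (ChainComplex D ℤ) :=
  {K | (∀ n : ℤ, K.ExactAt n) ∧ ∀ n : ℤ, (kernel (K.d n (n-1)) : D) ∈ ν}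

end ChainComplexes

end BalancedSystems
namespace BalancedSystems

variable {D : Type u} [Category.{v} D] [Abelian D]

section HomComplex

variable (K L : ChainComplex D ℤ)

/-- The `m`-th term of the Hom-complex `Hom(K,L)`:
`∏ᵢ Hom(Kᵢ, L_{i+m})`. -/
abbrev HomCgrp (m : ℤ) : Type v := ∀ i : ℤ, K.X i ⟶ L.X (i + m)

/-- The differential `∂_m` of the Hom-complex `Hom(K,L)`, going from degree `m`
to degree `m' = m - 1`, given by `∂_m(f)ᵢ = ∂^L_{m+i} ∘ fᵢ − (−1)^m fᵢ₋₁ ∘ ∂^K_i`. -/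
noncomputable def homCdiff (m m' : ℤ) (h : m' = m - 1) :
    HomCgrp K L m →+ HomCgrp K L m' :=
  AddMonoidHom.mk'
    (fun f i => f i ≫ L.d (i + m) (i + m') -
      (m.negOnePow : ℤ) •
        (K.d i (i-1) ≫ f (i-1) ≫ eqToHom (congrArg L.X (show (i-1) + m = i + m' by omega))))
    (by
      intro a b
      funext i
      simp only [Pi.add_apply, Preadditive.add_comp, Preadditive.comp_add, smul_add]
      abel)

/-- The `m`-th cohomology group of the Hom-complex `Hom(K,L)`. -/
noncomputable def HomCoh (m : ℤ) : Type v :=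
  (homCdiff K L m (m-1) rfl).ker ⧸
    ((homCdiff K L (m+1) m (by omega)).range.addSubgroupOf (homCdiff K L m (m-1) rfl).ker)

noncomputable instance (m : ℤ) : AddCommGroup (HomCoh K L m) :=
  inferInstanceAs (AddCommGroup ((homCdiff K L m (m-1) rfl).ker ⧸
    ((homCdiff K L (m+1) m (by omega)).range.addSubgroupOf (homCdiff K L m (m-1) rfl).ker)))

end HomComplex

end BalancedSystems
namespace BalancedSystems

variable {D : Type u} [Category.{v} D] [Abelian D]

/-- `L_X(X',X'')`: objects of `X''` admitting a proper left `X`-resolution with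
all cycles in `X'`. -/
noncomputable def LClass (X X' X'' : Set D) : Set D :=
  {M | M ∈ X'' ∧ ∃ R : LeftRes M, R.InClass X ∧ R.IsProper X ∧
    (kernel R.aug : D) ∈ X' ∧ ∀ n : ℕ, (kernel (R.d n) : D) ∈ X'}

/-- `L̄_X(X',X'') := L_X(X',X'') ∪ X`. -/
noncomputable def LBarClass (X X' X'' : Set D) : Set D := LClass X X' X'' ∪ X

/-- `R^Y(Y'',Y')`: objects of `Y''` admitting a proper right `Y`-resolution with
all cocycles in `Y'`. -/
noncomputable def RClass (Y Y'' Y' : Set D) : Set D :=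
  {N | N ∈ Y'' ∧ ∃ S : RightRes N, S.InClass Y ∧ S.IsProper Y ∧
    (cokernel S.aug : D) ∈ Y' ∧ ∀ n : ℕ, (cokernel (S.d n) : D) ∈ Y'}

/-- `R̄^Y(Y'',Y') := R^Y(Y'',Y') ∪ Y`. -/
noncomputable def RBarClass (Y Y'' Y' : Set D) : Set D := RClass Y Y'' Y' ∪ Y

section Ext

variable [HasExt.{w} D]

/-- `[(X,ω);(ν,Y)]` is a balanced system with respect to `[(X',X'');(Y'',Y')]`. -/
def IsBalancedSystem (X ω ν Y X' X'' Y'' Y' : Set D) : Prop :=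
  (X ⊆ X'' ∧ X' ⊆ X'' ∧ X'' ⊆ LPRes X) ∧
  (Y ⊆ Y'' ∧ Y' ⊆ Y'' ∧ Y'' ⊆ RPRes Y) ∧
  GeneratorIn X X'' ∧
  CogeneratorIn Y Y'' ∧
  RelGenerator ν Y ∧
  RelCogenerator ω X ∧
  ((∀ M ∈ X'', ∀ V ∈ ν, ExtZero.{w} M V 1) ∧ (∀ L ∈ X', ∀ B ∈ Y, ExtZero.{w} L B 1)) ∧
  ((∀ W ∈ ω, ∀ N ∈ Y'', ExtZero.{w} W N 1) ∧ (∀ A ∈ X, ∀ P ∈ Y', ExtZero.{w} A P 1))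

/-- `(X,Y)` is a complete hereditary cotorsion pair. -/
def IsCompleteHereditaryCotorsionPair (X Y : Set D) : Prop :=
  (∀ M : D, M ∈ X ↔ ∀ B ∈ Y, ExtZero.{w} M B 1) ∧
  (∀ N : D, N ∈ Y ↔ ∀ A ∈ X, ExtZero.{w} A N 1) ∧
  (∀ M : D, ∃ K ∈ Y, ∃ A ∈ X, ∃ (f : K ⟶ A) (g : A ⟶ M), IsSES f g) ∧
  (∀ M : D, ∃ B ∈ Y, ∃ Q ∈ X, ∃ (f : M ⟶ B) (g : B ⟶ Q), IsSES f g) ∧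
  (∀ A ∈ X, ∀ B ∈ Y, ∀ i : ℕ, 1 ≤ i → ExtZero.{w} A B i)

/-- `LPRes⁰(X)`: objects of `LPRes(X)` admitting an exact left `X`-resolution
with all cycles in `X^⊥`. -/
noncomputable def LPRes0 (X : Set D) : Set D :=
  LPRes X ∩ {M | ∃ R : LeftRes M, R.InClass X ∧ R.IsExactRes ∧
    (kernel R.aug : D) ∈ ExtPerp.{w} X ∧ ∀ n : ℕ, (kernel (R.d n) : D) ∈ ExtPerp.{w} X}

/-- `RPRes⁰(Y)`: objects of `RPRes(Y)` admitting an exact right `Y`-resolution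
with all cocycles in `^⊥Y`. -/
noncomputable def RPRes0 (Y : Set D) : Set D :=
  RPRes Y ∩ {N | ∃ S : RightRes N, S.InClass Y ∧ S.IsExactRes ∧
    (cokernel S.aug : D) ∈ PerpExt.{w} Y ∧ ∀ n : ℕ, (cokernel (S.d n) : D) ∈ PerpExt.{w} Y}

end Ext

end BalancedSystems


namespace BalancedSystems

section

variable {D : Type u} [Category.{v} D] [Abelian D]

/-! ### Lifting and extending along short exact sequences -/

theorem extend_of_extZero [HasExt.{w} D] {S : ShortComplex D} (hS : S.ShortExact) {V : D}
    (h : ExtZero.{w} S.X₃ V 1) (f : S.X₁ ⟶ V) : ∃ g : S.X₂ ⟶ V, S.f ≫ g = f := by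
  have : Subsingleton (Abelian.Ext.{w} S.X₃ V 1) := h
  obtain ⟨x, hx⟩ := Abelian.Ext.contravariant_sequence_exact₁ hS V (Abelian.Ext.mk₀ f)
    (n₁ := 1) rfl (Subsingleton.elim _ _)
  obtain ⟨g, rfl⟩ := (Abelian.Ext.mk₀_bijective _ _).2 x
  rw [Abelian.Ext.mk₀_comp_mk₀] at hx
  exact ⟨g, (Abelian.Ext.mk₀_bijective _ _).1 hx⟩

theorem lift_of_extZero [HasExt.{w} D] {S : ShortComplex D} (hS : S.ShortExact) {K : D}
    (h : ExtZero.{w} K S.X₁ 1) (f : K ⟶ S.X₃) : ∃ g : K ⟶ S.X₂, g ≫ S.g = f := by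
  have : Subsingleton (Abelian.Ext.{w} K S.X₁ 1) := h
  obtain ⟨x, hx⟩ := Abelian.Ext.covariant_sequence_exact₃ K hS (Abelian.Ext.mk₀ f)
    (n₁ := 1) rfl (Subsingleton.elim _ _)
  obtain ⟨g, rfl⟩ := (Abelian.Ext.mk₀_bijective _ _).2 x
  rw [Abelian.Ext.mk₀_comp_mk₀] at hx
  exact ⟨g, (Abelian.Ext.mk₀_bijective _ _).1 hx⟩

/-- The short exact sequence `ker h → A → Q` attached to an epi-mono factorization of `h`. -/
theorem shortExact_kernel {A Q T : D} {h : A ⟶ T} (p : A ⟶ Q) (m : Q ⟶ T) [Epi p] [Mono m]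
    (hpm : p ≫ m = h) :
    ∃ z : kernel.ι h ≫ p = 0, (ShortComplex.mk (kernel.ι h) p z).ShortExact := by
  have z : kernel.ι h ≫ p = 0 := by
    rw [← cancel_mono m, Category.assoc, hpm, kernel.condition, zero_comp]
  refine ⟨z, ?_⟩
  have hex : (ShortComplex.mk (kernel.ι h) p z).Exact :=
    ShortComplex.exact_of_f_is_kernel _
      (KernelFork.IsLimit.ofι' _ _ fun k hk =>
        ⟨kernel.lift h k (by rw [← hpm, ← Category.assoc, hk, zero_comp]), by simp⟩)
  exact { exact := hex, mono_f := by dsimp; infer_instance, epi_g := by dsimp; infer_instance }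

theorem shortExact_cokernel {T Q B : D} {h : T ⟶ B} (p : T ⟶ Q) (m : Q ⟶ B) [Epi p] [Mono m]
    (hpm : p ≫ m = h) :
    ∃ z : m ≫ cokernel.π h = 0, (ShortComplex.mk m (cokernel.π h) z).ShortExact := by
  have z : m ≫ cokernel.π h = 0 := by
    rw [← cancel_epi p, ← Category.assoc, hpm, cokernel.condition, comp_zero]
  refine ⟨z, ?_⟩
  have hex : (ShortComplex.mk m (cokernel.π h) z).Exact :=
    ShortComplex.exact_of_g_is_cokernel _
      (CokernelCofork.IsColimit.ofπ' _ _ fun k hk =>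
        ⟨cokernel.desc h k (by rw [← hpm, Category.assoc, hk, comp_zero]), by simp⟩)
  exact { exact := hex, mono_f := by dsimp; infer_instance, epi_g := by dsimp; infer_instance }

/-- The key step: a morphism `K ⟶ B` lifts along the relative generator `V ⟶ B` because
`Ext¹(K, 𝒴) = 0`, and the lift extends to the middle term because `Ext¹(M, ν) = 0`. -/
theorem extend_of_relGenerator [HasExt.{w} D] {ν Y : Set D} (hν : RelGenerator ν Y)
    {S : ShortComplex D} (hS : S.ShortExact) (h₃ : ∀ V ∈ ν, ExtZero.{w} S.X₃ V 1)
    (h₁ : ∀ B ∈ Y, ExtZero.{w} S.X₁ B 1) {B : D} (hB : B ∈ Y) (f : S.X₁ ⟶ B) :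
    ∃ g : S.X₂ ⟶ B, S.f ≫ g = f := by
  obtain ⟨V, hV, B', hB', i, q, _, hq⟩ := hν.2 B hB
  obtain ⟨f', hf'⟩ := lift_of_extZero hq (h₁ B' hB') f
  obtain ⟨g, hg⟩ := extend_of_extZero hS (h₃ V hV) f'
  exact ⟨g ≫ q, by rw [← Category.assoc, hg]; exact hf'⟩

theorem lift_of_relCogenerator [HasExt.{w} D] {ω X : Set D} (hω : RelCogenerator ω X)
    {S : ShortComplex D} (hS : S.ShortExact) (h₁ : ∀ W ∈ ω, ExtZero.{w} W S.X₁ 1)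
    (h₃ : ∀ A ∈ X, ExtZero.{w} A S.X₃ 1) {A : D} (hA : A ∈ X) (f : A ⟶ S.X₃) :
    ∃ g : A ⟶ S.X₂, g ≫ S.g = f := by
  obtain ⟨W, hW, A', hA', j, q, _, hq⟩ := hω.2 A hA
  obtain ⟨f', hf'⟩ := extend_of_extZero hq (h₃ A' hA') f
  obtain ⟨g, hg⟩ := lift_of_extZero hS (h₁ W hW) f'
  exact ⟨j ≫ g, by rw [Category.assoc, hg]; exact hf'⟩

theorem epi_of_lifts {X X'' : Set D} (hX : GeneratorIn X X'') {A K : D} (hK : K ∈ X'')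
    (p : A ⟶ K) (hp : ∀ T ∈ X, ∀ f : T ⟶ K, ∃ g, g ≫ p = f) : Epi p := by
  obtain ⟨T, hT, q, hq⟩ := hX K hK
  obtain ⟨g, hg⟩ := hp T hT q
  exact epi_of_epi_fac hg

theorem mono_of_extends {Y Y'' : Set D} (hY : CogeneratorIn Y Y'') {A K : D} (hK : K ∈ Y'')
    (p : K ⟶ A) (hp : ∀ T ∈ Y, ∀ f : K ⟶ T, ∃ g, p ≫ g = f) : Mono p := by
  obtain ⟨T, hT, q, hq⟩ := hY K hK
  obtain ⟨g, hg⟩ := hp T hT q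
  exact mono_of_mono_fac hg

/-- If `P ⟶ Q ⟶ R ⟶ T` is exact in `D` (encoded by the two `Epi` hypotheses), then `Hom(-, B)`
is exact at `Q` as soon as morphisms to `B` from the kernel of `R ⟶ T` extend to `R`. -/
theorem factor_of_epi_kernel_lift {P Q R T B : D} (f : P ⟶ Q) (g : Q ⟶ R) (h : R ⟶ T)
    (fg : f ≫ g = 0) (gh : g ≫ h = 0) (hf : Epi (kernel.lift g f fg))
    (hg : Epi (kernel.lift h g gh)) (hext : ∀ a : kernel h ⟶ B, ∃ b, kernel.ι h ≫ b = a)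
    (u : Q ⟶ B) (hu : f ≫ u = 0) : ∃ v, g ≫ v = u := by
  have hk : kernel.ι g ≫ u = 0 := by
    rw [← cancel_epi (kernel.lift g f fg), kernel.lift_ι_assoc, hu, comp_zero]
  have hk' : kernel.ι (kernel.lift h g gh) ≫ u = 0 := by
    have : kernel.ι (kernel.lift h g gh) ≫ g = 0 := by
      simpa only [Category.assoc, kernel.lift_ι, zero_comp] using
        congr($(kernel.condition (kernel.lift h g gh)) ≫ kernel.ι h)
    rw [← kernel.lift_ι g _ this, Category.assoc, hk, comp_zero]
  obtain ⟨b, hb⟩ := hext (Abelian.epiDesc (kernel.lift h g gh) u hk')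
  refine ⟨b, ?_⟩
  rw [← Abelian.comp_epiDesc (kernel.lift h g gh) u hk', ← hb, kernel.lift_ι_assoc]

theorem factor_of_mono_cokernel_desc {P Q R T A : D} (h : T ⟶ R) (g : R ⟶ Q) (f : Q ⟶ P)
    (hg' : h ≫ g = 0) (gf : g ≫ f = 0) (hf : Mono (cokernel.desc g f gf))
    (hg : Mono (cokernel.desc h g hg'))
    (hlift : ∀ a : A ⟶ cokernel h, ∃ b, b ≫ cokernel.π h = a)
    (u : A ⟶ Q) (hu : u ≫ f = 0) : ∃ v, v ≫ g = u := by
  have hk : u ≫ cokernel.π g = 0 := by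
    rw [← cancel_mono (cokernel.desc g f gf), Category.assoc, cokernel.π_desc, hu, zero_comp]
  have hk' : u ≫ cokernel.π (cokernel.desc h g hg') = 0 := by
    have : g ≫ cokernel.π (cokernel.desc h g hg') = 0 := by
      simpa only [cokernel.π_desc_assoc, comp_zero] using
        congr(cokernel.π h ≫ $(cokernel.condition (cokernel.desc h g hg')))
    rw [← cokernel.π_desc g _ this, ← Category.assoc, hk, zero_comp]
  obtain ⟨b, hb⟩ := hlift (Abelian.monoLift (cokernel.desc h g hg') u hk')
  refine ⟨b, ?_⟩
  rw [← Abelian.monoLift_comp (cokernel.desc h g hg') u hk', ← hb, Category.assoc,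
    cokernel.π_desc]

/-! ### Resolutions with syzygies in the prescribed class -/

theorem LeftRes.isCoacyclic_of_kernel_mem [HasExt.{w} D] {X ν Y X' X'' : Set D}
    (hX' : X' ⊆ X'') (hgen : GeneratorIn X X'') (hν : RelGenerator ν Y)
    (hXν : ∀ M ∈ X'', ∀ V ∈ ν, ExtZero.{w} M V 1) (hXY : ∀ L ∈ X', ∀ B ∈ Y, ExtZero.{w} L B 1)
    {M : D} (hM : M ∈ X'') (R : LeftRes M) (hR : R.IsProper X)
    (h0 : kernel R.aug ∈ X') (hk : ∀ n, kernel (R.d n) ∈ X') : R.IsCoacyclic Y := by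
  have eaug : Epi R.aug := epi_of_lifts hgen hM _ fun T hT => (hR T hT).1
  have e0 : Epi (kernel.lift R.aug (R.d 0) R.daug) :=
    epi_of_lifts hgen (hX' h0) _ fun T hT f => by
      obtain ⟨g, hg⟩ := (hR T hT).2.1 (f ≫ kernel.ι _) (by simp)
      exact ⟨g, by rw [← cancel_mono (kernel.ι _), Category.assoc, kernel.lift_ι, hg]⟩
  have e (n : ℕ) : Epi (kernel.lift (R.d n) (R.d (n+1)) (R.dd n)) :=
    epi_of_lifts hgen (hX' (hk n)) _ fun T hT f => by
      obtain ⟨g, hg⟩ := (hR T hT).2.2 n (f ≫ kernel.ι _) (by simp)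
      exact ⟨g, by rw [← cancel_mono (kernel.ι _), Category.assoc, kernel.lift_ι, hg]⟩
  intro B hB
  have ext {P Q T : D} (h : P ⟶ T) (p : P ⟶ Q) (m : Q ⟶ T) (_ : Epi p) (_ : Mono m)
      (hpm : p ≫ m = h) (hQ : Q ∈ X'') (hK : kernel h ∈ X') (a : kernel h ⟶ B) :
      ∃ b, kernel.ι h ≫ b = a := by
    obtain ⟨_, hS⟩ := shortExact_kernel p m hpm
    exact extend_of_relGenerator hν hS (hXν Q hQ) (hXY _ hK) hB a
  refine ⟨fun u hu => by rwa [← cancel_epi R.aug, comp_zero], fun u hu => ?_, fun n u hu => ?_⟩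
  · have hu' : kernel.ι R.aug ≫ u = 0 := by
      rw [← cancel_epi (kernel.lift R.aug (R.d 0) R.daug), kernel.lift_ι_assoc, hu, comp_zero]
    exact ⟨Abelian.epiDesc R.aug u hu', Abelian.comp_epiDesc _ _ _⟩
  · cases n with
    | zero =>
      exact factor_of_epi_kernel_lift _ _ _ (R.dd 0) R.daug (e 0) e0
        (ext R.aug R.aug (𝟙 M) eaug inferInstance (Category.comp_id _) hM h0) u hu
    | succ n =>
      refine factor_of_epi_kernel_lift _ _ _ (R.dd (n+1)) (R.dd n) (e (n+1)) (e n) ?_ u hu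
      cases n with
      | zero =>
        exact ext (R.d 0) _ (kernel.ι R.aug) e0 inferInstance (kernel.lift_ι _ _ _)
          (hX' h0) (hk 0)
      | succ n =>
        exact ext (R.d (n+1)) _ (kernel.ι (R.d n)) (e n) inferInstance (kernel.lift_ι _ _ _)
          (hX' (hk n)) (hk (n+1))

theorem RightRes.isCoacyclic_of_cokernel_mem [HasExt.{w} D] {Y ω X Y' Y'' : Set D}
    (hY' : Y' ⊆ Y'') (hcog : CogeneratorIn Y Y'') (hω : RelCogenerator ω X)
    (hωY : ∀ W ∈ ω, ∀ N ∈ Y'', ExtZero.{w} W N 1) (hXY : ∀ A ∈ X, ∀ P ∈ Y', ExtZero.{w} A P 1)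
    {N : D} (hN : N ∈ Y'') (S : RightRes N) (hS : S.IsProper Y)
    (h0 : cokernel S.aug ∈ Y') (hk : ∀ n, cokernel (S.d n) ∈ Y') : S.IsCoacyclic X := by
  have maug : Mono S.aug := mono_of_extends hcog hN _ fun T hT => (hS T hT).1
  have m0 : Mono (cokernel.desc S.aug (S.d 0) S.daug) :=
    mono_of_extends hcog (hY' h0) _ fun T hT f => by
      obtain ⟨g, hg⟩ := (hS T hT).2.1 (cokernel.π _ ≫ f) (by simp)
      exact ⟨g, by rw [← cancel_epi (cokernel.π _), cokernel.π_desc_assoc, hg]⟩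
  have m (n : ℕ) : Mono (cokernel.desc (S.d n) (S.d (n+1)) (S.dd n)) :=
    mono_of_extends hcog (hY' (hk n)) _ fun T hT f => by
      obtain ⟨g, hg⟩ := (hS T hT).2.2 n (cokernel.π _ ≫ f) (by simp)
      exact ⟨g, by rw [← cancel_epi (cokernel.π _), cokernel.π_desc_assoc, hg]⟩
  intro A hA
  have lift {P Q T : D} (h : T ⟶ P) (p : T ⟶ Q) (m : Q ⟶ P) (_ : Epi p) (_ : Mono m)
      (hpm : p ≫ m = h) (hQ : Q ∈ Y'') (hK : cokernel h ∈ Y') (a : A ⟶ cokernel h) :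
      ∃ b, b ≫ cokernel.π h = a := by
    obtain ⟨_, hE⟩ := shortExact_cokernel p m hpm
    exact lift_of_relCogenerator hω hE (fun W hW => hωY W hW Q hQ)
      (fun T hT => hXY T hT _ hK) hA a
  refine ⟨fun u hu => by rwa [← cancel_mono S.aug, zero_comp], fun u hu => ?_, fun n u hu => ?_⟩
  · have hu' : u ≫ cokernel.π S.aug = 0 := by
      rw [← cancel_mono (cokernel.desc S.aug (S.d 0) S.daug), Category.assoc, cokernel.π_desc,
        hu, zero_comp]
    exact ⟨Abelian.monoLift S.aug u hu', Abelian.monoLift_comp _ _ _⟩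
  · cases n with
    | zero =>
      exact factor_of_mono_cokernel_desc _ _ _ S.daug (S.dd 0) (m 0) m0
        (lift S.aug (𝟙 N) S.aug inferInstance maug (Category.id_comp _) hN h0) u hu
    | succ n =>
      refine factor_of_mono_cokernel_desc _ _ _ (S.dd n) (S.dd (n+1)) (m (n+1)) (m n) ?_ u hu
      cases n with
      | zero =>
        exact lift (S.d 0) (cokernel.π S.aug) _ inferInstance m0 (cokernel.π_desc _ _ _)
          (hY' h0) (hk 0)
      | succ n =>
        exact lift (S.d (n+1)) (cokernel.π (S.d n)) _ inferInstance (m n)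
          (cokernel.π_desc _ _ _) (hY' (hk n)) (hk (n+1))

/-! ### Proper resolutions of objects of the resolving class -/

/-- If `M` itself lies in `X`, then a proper left `X`-resolution of `M` is contractible (all terms
of the augmented complex lie in `X`), so `Hom(-, B)` keeps it exact for every `B`. -/
theorem LeftRes.isCoacyclic_of_mem {X : Set D} (Y : Set D) {M : D} (hM : M ∈ X) (R : LeftRes M)
    (hRX : R.InClass X) (hR : R.IsProper X) : R.IsCoacyclic Y := by
  obtain ⟨s, hs⟩ := (hR M hM).1 (𝟙 M)
  obtain ⟨t, ht⟩ := (hR _ (hRX 0)).2.1 (𝟙 _ - R.aug ≫ s) (by simp [hs])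
  -- one step of a contracting homotopy: `h` makes `d n` split, `k` is the next component
  have step (n : ℕ) (h : R.obj n ⟶ R.obj (n+1)) (hh : R.d n ≫ h ≫ R.d n = R.d n) :
      ∃ k : R.obj (n+1) ⟶ R.obj (n+2), k ≫ R.d (n+1) = 𝟙 _ - R.d n ≫ h :=
    (hR _ (hRX (n+1))).2.2 n _ (by simp [hh])
  have split (n : ℕ) : ∃ h : R.obj n ⟶ R.obj (n+1), R.d n ≫ h ≫ R.d n = R.d n := by
    induction n with
    | zero => exact ⟨t, by simp [ht, reassoc_of% R.daug]⟩
    | succ n ih =>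
      obtain ⟨h, hh⟩ := ih
      obtain ⟨k, hk⟩ := step n h hh
      exact ⟨k, by simp [hk, reassoc_of% R.dd n]⟩
  intro B _
  refine ⟨fun u hu => ?_, fun u hu => ⟨s ≫ u, ?_⟩, fun n u hu => ?_⟩
  · rw [← Category.id_comp u, ← hs, Category.assoc, hu, comp_zero]
  · have := congr($ht ≫ u)
    rw [Category.assoc, hu, comp_zero, Preadditive.sub_comp, Category.id_comp, Category.assoc]
      at this
    exact (sub_eq_zero.1 this.symm).symm
  · obtain ⟨h, hh⟩ := split n
    obtain ⟨k, hk⟩ := step n h hh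
    refine ⟨h ≫ u, ?_⟩
    have := congr($hk ≫ u)
    rw [Category.assoc, hu, comp_zero, Preadditive.sub_comp, Category.id_comp, Category.assoc]
      at this
    exact (sub_eq_zero.1 this.symm).symm

theorem RightRes.isCoacyclic_of_mem {Y : Set D} (X : Set D) {N : D} (hN : N ∈ Y) (S : RightRes N)
    (hSY : S.InClass Y) (hS : S.IsProper Y) : S.IsCoacyclic X := by
  obtain ⟨s, hs⟩ := (hS N hN).1 (𝟙 N)
  obtain ⟨t, ht⟩ := (hS _ (hSY 0)).2.1 (𝟙 _ - s ≫ S.aug) (by simp [reassoc_of% hs])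
  have step (n : ℕ) (h : S.obj (n+1) ⟶ S.obj n) (hh : S.d n ≫ h ≫ S.d n = S.d n) :
      ∃ k : S.obj (n+2) ⟶ S.obj (n+1), S.d (n+1) ≫ k = 𝟙 _ - h ≫ S.d n :=
    (hS _ (hSY (n+1))).2.2 n _ (by simp [hh])
  have split (n : ℕ) : ∃ h : S.obj (n+1) ⟶ S.obj n, S.d n ≫ h ≫ S.d n = S.d n := by
    induction n with
    | zero => exact ⟨t, by simp [reassoc_of% ht, S.daug]⟩
    | succ n ih =>
      obtain ⟨h, hh⟩ := ih
      obtain ⟨k, hk⟩ := step n h hh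
      exact ⟨k, by simp [reassoc_of% hk, S.dd n]⟩
  intro A _
  refine ⟨fun u hu => ?_, fun u hu => ⟨u ≫ s, ?_⟩, fun n u hu => ?_⟩
  · rw [← Category.comp_id u, ← hs, ← Category.assoc, hu, zero_comp]
  · have := congr(u ≫ $ht)
    rw [← Category.assoc, hu, zero_comp, Preadditive.comp_sub, Category.comp_id,
      ← Category.assoc] at this
    exact (sub_eq_zero.1 this.symm).symm
  · obtain ⟨h, hh⟩ := split n
    obtain ⟨k, hk⟩ := step n h hh
    refine ⟨u ≫ h, ?_⟩
    have := congr(u ≫ $hk)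
    rw [← Category.assoc, hu, zero_comp, Preadditive.comp_sub, Category.comp_id,
      ← Category.assoc] at this
    exact (sub_eq_zero.1 this.symm).symm

end

end BalancedSystems

open BalancedSystems in
/-- If `[(X,ω);(ν,Y)]` is a balanced system with respect to
`[(X′,X″);(Y″,Y′)]`, then `(X,Y)` is a balanced pair with respect to
`(L̄_X(X′,X″), R̄^Y(Y″,Y′))`. -/
theorem statement10 {C : Type u} [Category.{v} C] [Abelian C] [HasExt.{w} C]
    (𝒳 ω ν 𝒴 X' X'' Y'' Y' : Set C)
    (h1 : IsoClosed 𝒳) (h2 : IsoClosed ω) (h3 : IsoClosed ν) (h4 : IsoClosed 𝒴)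
    (h5 : IsoClosed X') (h6 : IsoClosed X'') (h7 : IsoClosed Y'') (h8 : IsoClosed Y')
    (hbs : IsBalancedSystem.{w} 𝒳 ω ν 𝒴 X' X'' Y'' Y') :
    IsBalancedPair 𝒳 𝒴 (LBarClass 𝒳 X' X'') (RBarClass 𝒴 Y'' Y') := by
  obtain ⟨⟨hX, hX', hXL⟩, ⟨hY, hY', hYR⟩, hgen, hcog, hν, hω, ⟨hXν, hX'Y⟩, hωY, hXY'⟩ := hbs
  have left : ∀ M ∈ LBarClass 𝒳 X' X'',
      ∃ R : LeftRes M, R.InClass 𝒳 ∧ R.IsProper 𝒳 ∧ R.IsCoacyclic 𝒴 := by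
    rintro M (⟨hM, R, hRX, hR, h0, hk⟩ | hM)
    · exact ⟨R, hRX, hR, R.isCoacyclic_of_kernel_mem hX' hgen hν hXν hX'Y hM hR h0 hk⟩
    · obtain ⟨R, hRX, hR⟩ := hXL (hX hM)
      exact ⟨R, hRX, hR, R.isCoacyclic_of_mem 𝒴 hM hRX hR⟩
  have right : ∀ N ∈ RBarClass 𝒴 Y'' Y',
      ∃ S : RightRes N, S.InClass 𝒴 ∧ S.IsProper 𝒴 ∧ S.IsCoacyclic 𝒳 := by
    rintro N (⟨hN, S, hSY, hS, h0, hk⟩ | hN)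
    · exact ⟨S, hSY, hS, S.isCoacyclic_of_cokernel_mem hY' hcog hω hωY hXY' hN hS h0 hk⟩
    · obtain ⟨S, hSY, hS⟩ := hYR (hY hN)
      exact ⟨S, hSY, hS, S.isCoacyclic_of_mem 𝒳 hN hSY hS⟩
  refine ⟨fun _ h => Or.inr h, fun M hM => ?_, fun _ h => Or.inr h, fun N hN => ?_, left, right⟩
  · obtain ⟨R, hRX, hR, _⟩ := left M hM
    exact ⟨R, hRX, hR⟩
  · obtain ⟨S, hSY, hS, _⟩ := right N hN
    exact ⟨S, hSY, hS⟩
end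

section
/- If [(X,ω);(ν,Y)] is a finite balanced system in an abelian category A, then (X,Y) is a balanced pair with respect to (X^∧, Y^∨). -/
/-!
Let `M` have finite left `X`-resolution dimension. The Auslander–Buchweitz argument (`exists_hull`,
`exists_approx`) gives a short exact sequence `K → A → M` with `A ∈ X` and `K ∈ ω^∧`, and `K` is
resolved by objects of `ω`, all syzygies staying in `ω^∧`. Splicing yields an exact left
`X`-resolution of `M` made of short exact sequences `K' → A' → M'` with `K' ∈ ω^∧`, `A' ∈ X` and
`M' ∈ X^∧`; if `M ∈ X`, the identity of `M` is used instead.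

* Dimension shifting gives `Ext¹(X, ω^∧) = 0`, so each such sequence is `Hom(X,-)`-exact.
* For `B ∈ Y`, a morphism `K' ⟶ B` lifts along the epimorphism `V ⟶ B` from an object of `ν` with
  kernel in `Y`, since `Ext¹(ω^∧, Y) = 0`; the lift extends to `A'` since `Ext¹(X^∧, ν) = 0`. So
  each sequence is `Hom(-,Y)`-exact.

Both kinds of exactness pass to the spliced resolution (`HasBalancedRes.splice`). The argument uses
`Ext¹ = 0` only through lifting and extending morphisms along short exact sequences
(`LiftsAndExtends`), a self-dual condition, so that the statement about `Y^∨` is the same result in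
the opposite category, for the classes opposite to `Y, ν, ω, X`.
-/

open CategoryTheory CategoryTheory.Limits

universe w w' v u

namespace BalancedSystems

variable {D : Type u} [Category.{v} D] [Abelian D]

/-! ### Short exact sequences and pushouts -/

lemma isSES_of_cokernel {A B E : D} {f : A ⟶ B} {g : B ⟶ E} [Mono f] [Epi g]
    (w : f ≫ g = 0) (h : ∀ {T : D} (k : B ⟶ T), f ≫ k = 0 → ∃ l, g ≫ l = k) : IsSES f g := by
  refine ⟨w, ShortComplex.ShortExact.mk' (ShortComplex.exact_of_g_is_cokernel _ ?_) ‹_› ‹_›⟩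
  refine CokernelCofork.IsColimit.ofπ g w (fun k hk => (h k hk).choose)
    (fun k hk => (h k hk).choose_spec) (fun k hk m hm => ?_)
  rw [← cancel_epi g, hm, (h k hk).choose_spec]

lemma IsSES.mono {A B E : D} {f : A ⟶ B} {g : B ⟶ E} (h : IsSES f g) : Mono f := h.2.mono_f

lemma IsSES.epi {A B E : D} {f : A ⟶ B} {g : B ⟶ E} (h : IsSES f g) : Epi g := h.2.epi_g

lemma IsSES.desc {A B E T : D} {f : A ⟶ B} {g : B ⟶ E} (h : IsSES f g) (k : B ⟶ T)
    (hk : f ≫ k = 0) : ∃ l : E ⟶ T, g ≫ l = k := by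
  have := h.2.epi_g
  exact ⟨h.2.exact.desc k hk, h.2.exact.g_desc k hk⟩

lemma IsSES.lift {A B E T : D} {f : A ⟶ B} {g : B ⟶ E} (h : IsSES f g) (k : T ⟶ B)
    (hk : k ≫ g = 0) : ∃ l : T ⟶ A, l ≫ f = k := by
  have := h.2.mono_f
  exact ⟨h.2.exact.lift k hk, h.2.exact.lift_f k hk⟩

lemma IsSES.op {A B E : D} {f : A ⟶ B} {g : B ⟶ E} (h : IsSES f g) : IsSES g.op f.op :=
  ⟨by rw [← op_comp, h.1, op_zero], h.2.op⟩

lemma IsSES.unop {A B E : Dᵒᵖ} {f : A ⟶ B} {g : B ⟶ E} (h : IsSES f g) :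
    IsSES g.unop f.unop :=
  ⟨by rw [← unop_comp, h.1, unop_zero], h.2.unop⟩

/-- The pushout of a short exact sequence `A → B → E` along a map `h : A ⟶ A'` is a short exact
sequence `A' → P → E`. -/
lemma IsSES.pushout {A B E A' P : D} {f : A ⟶ B} {g : B ⟶ E} (hs : IsSES f g) {h : A ⟶ A'}
    {b : B ⟶ P} {a : A' ⟶ P} (sq : IsPushout f h b a) :
    ∃ q : P ⟶ E, b ≫ q = g ∧ IsSES a q := by
  have := hs.mono
  have := hs.epi
  have : Mono a := Abelian.mono_inr_of_isColimit _ _ sq.isColimit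
  let q : P ⟶ E := sq.desc g 0 (by rw [hs.1, comp_zero])
  have hb : b ≫ q = g := sq.inl_desc _ _ _
  have ha : a ≫ q = 0 := sq.inr_desc _ _ _
  have : Epi q := epi_of_epi_fac hb
  refine ⟨q, hb, isSES_of_cokernel ha fun k hk => ?_⟩
  obtain ⟨l, hl⟩ := hs.desc (b ≫ k) (by rw [← Category.assoc, sq.w, Category.assoc, hk, comp_zero])
  refine ⟨l, sq.hom_ext ?_ ?_⟩
  · rw [← Category.assoc, hb, hl]
  · rw [← Category.assoc, ha, zero_comp, hk]

/-- The pushout of a short exact sequence `A → B → E` along a monomorphism `j : B ⟶ W` is a short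
exact sequence `A → W → Z` whose first map is the composite `A → B → W`. -/
lemma IsSES.comp_pushout {A B E W Z : D} {f : A ⟶ B} {g : B ⟶ E} (hs : IsSES f g) {j : B ⟶ W}
    [Mono j] {z : W ⟶ Z} {e : E ⟶ Z} (sq : IsPushout j g z e) : IsSES (f ≫ j) z := by
  have := hs.mono
  have := hs.epi
  have : Epi z := ⟨fun u u' h => sq.hom_ext h (by
    rw [← cancel_epi g, ← Category.assoc, ← Category.assoc, ← sq.w, Category.assoc,
      Category.assoc, h])⟩
  refine isSES_of_cokernel
    (by rw [Category.assoc, sq.w, ← Category.assoc, hs.1, zero_comp]) fun k hk => ?_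
  obtain ⟨l, hl⟩ := hs.desc (j ≫ k) (by rw [← Category.assoc, hk])
  exact ⟨sq.desc k l hl.symm, sq.inl_desc _ _ _⟩

/-! ### Auslander–Buchweitz approximations -/

/-- Every object `M` of resolution dimension at most `n` embeds into an object of the same
resolution dimension with respect to `ω`, with cokernel in `X`. -/
lemma exists_hull {X ω : Set D} (hX : ExtensionClosed X) (hω : RelCogenerator ω X) (n : ℕ) :
    ∀ M ∈ ResDimLE X n, ∃ H ∈ ResDimLE ω n, ∃ X' ∈ X, ∃ (f : M ⟶ H) (g : H ⟶ X'), IsSES f g := by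
  induction n with
  | zero => exact fun M hM => hω.2 M hM
  | succ n ih =>
    rintro M ⟨K, hK, A, hA, f, g, hs⟩
    obtain ⟨H, hH, X', hX', i, p, hi⟩ := ih K hK
    have sq := IsPushout.of_hasPushout f i
    obtain ⟨q, -, hq⟩ := hs.pushout sq
    obtain ⟨r, -, hr⟩ := hi.pushout sq.flip
    obtain ⟨W, hW, X'', hX'', j, t, hj⟩ := hω.2 _ (hX _ _ hA hX' hr)
    have := hj.mono
    have sq' := IsPushout.of_hasPushout j q
    obtain ⟨s, -, hs'⟩ := hj.pushout sq'
    exact ⟨_, ⟨H, hH, W, hW, _, _, hq.comp_pushout sq'⟩, X'', hX'', _, s, hs'⟩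

/-- Every object of resolution dimension at most `n + 1` is the quotient of an object of `X` by an
object of `ω`-resolution dimension at most `n`. -/
lemma exists_approx {X ω : Set D} (hX : ExtensionClosed X) (hω : RelCogenerator ω X) (n : ℕ)
    (M : D) (hM : M ∈ ResDimLE X (n + 1)) :
    ∃ H ∈ ResDimLE ω n, ∃ Q ∈ X, ∃ (f : H ⟶ Q) (g : Q ⟶ M), IsSES f g := by
  obtain ⟨K, hK, A, hA, f, g, hs⟩ := hM
  obtain ⟨H, hH, X', hX', i, p, hi⟩ := exists_hull hX hω n K hK
  have sq := IsPushout.of_hasPushout f i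
  obtain ⟨q, -, hq⟩ := hs.pushout sq
  obtain ⟨r, -, hr⟩ := hi.pushout sq.flip
  exact ⟨H, hH, _, hX _ _ hA hX' hr, _, q, hq⟩

lemma resDimLE_mono {X ω : Set D} (h : ω ⊆ X) (n : ℕ) : ResDimLE ω n ⊆ ResDimLE X n := by
  induction n with
  | zero => exact h
  | succ n ih =>
    rintro M ⟨K, hK, A, hA, f, g, hs⟩
    exact ⟨K, ih hK, A, h hA, f, g, hs⟩

/-! ### Splicing resolutions -/

/-- `M` admits a proper left `X`-resolution which is `Hom(-,Y)`-acyclic. -/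
def HasBalancedRes (X Y : Set D) (M : D) : Prop :=
  ∃ R : LeftRes M, R.InClass X ∧ R.IsProper X ∧ R.IsCoacyclic Y

lemma hasBalancedRes_of_mem {X : Set D} (Y : Set D) {Z : D} (hZ : Z ∈ X) (hZ0 : IsZero Z) {M : D}
    (hM : M ∈ X) : HasBalancedRes X Y M := by
  refine ⟨{ obj := fun n => Nat.casesOn n M (fun _ => Z), d := fun _ => 0, aug := 𝟙 M,
            dd := fun _ => zero_comp, daug := zero_comp }, ?_, ?_, ?_⟩
  · rintro (_ | n)
    exacts [hM, hZ]
  · intro A hA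
    refine ⟨fun f => ⟨f, Category.comp_id f⟩, fun f hf => ⟨0, ?_⟩,
      fun n f hf => ⟨0, hZ0.eq_of_tgt _ _⟩⟩
    rw [← Category.comp_id f]
    exact zero_comp.trans hf.symm
  · intro B hB
    refine ⟨fun u hu => (Category.id_comp u).symm.trans hu, fun u _ => ⟨u, Category.id_comp u⟩,
      fun n u hu => ⟨0, hZ0.eq_of_src _ _⟩⟩

/-- A balanced resolution of `K` extends along a short exact sequence `K → A → M` which is both
`Hom(X,-)`- and `Hom(-,Y)`-exact. -/
lemma HasBalancedRes.splice {X Y : Set D} {K A M : D} (hK : HasBalancedRes X Y K) (hA : A ∈ X)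
    {f : K ⟶ A} {g : A ⟶ M} (hs : IsSES f g)
    (hX : ∀ Q ∈ X, ∀ u : Q ⟶ M, ∃ l : Q ⟶ A, l ≫ g = u)
    (hY : ∀ B ∈ Y, ∀ u : K ⟶ B, ∃ l : A ⟶ B, f ≫ l = u) : HasBalancedRes X Y M := by
  obtain ⟨R, hR, hP, hC⟩ := hK
  have := hs.mono
  have := hs.epi
  refine ⟨{ obj := fun n => Nat.casesOn n A R.obj
            d := fun n => match n with
              | 0 => R.aug ≫ f
              | n + 1 => R.d n
            aug := g
            dd := ?_
            daug := (Category.assoc _ _ _).trans (by rw [hs.1, comp_zero]) }, ?_, ?_, ?_⟩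
  · rintro (_ | n)
    · exact (Category.assoc _ _ _).symm.trans (by rw [R.daug, zero_comp])
    · exact R.dd n
  · rintro (_ | n)
    exacts [hA, hR n]
  · intro Q hQ
    obtain ⟨p1, p2, p3⟩ := hP Q hQ
    refine ⟨hX Q hQ, fun u hu => ?_, ?_⟩
    · obtain ⟨l, hl⟩ := hs.lift u hu
      obtain ⟨m, hm⟩ := p1 l
      exact ⟨m, (Category.assoc _ _ _).symm.trans (by rw [hm, hl])⟩
    · rintro (_ | n) u hu
      · refine p2 u ?_
        rw [← cancel_mono f, zero_comp, Category.assoc]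
        exact hu
      · exact p3 n u hu
  · intro B hB
    obtain ⟨c1, c2, c3⟩ := hC B hB
    refine ⟨fun u hu => ?_, fun u hu => ?_, ?_⟩
    · rw [← cancel_epi g, comp_zero]
      exact hu
    · exact hs.desc u (c1 _ ((Category.assoc _ _ _).symm.trans hu))
    · rintro (_ | n) u hu
      · obtain ⟨l, hl⟩ := c2 u hu
        obtain ⟨m, hm⟩ := hY B hB l
        exact ⟨m, (Category.assoc _ _ _).trans (by rw [hm, hl])⟩
      · exact c3 n u hu

/-! ### The left half, in terms of lifting properties -/

/-- A form of `Ext¹(A, B) = 0` that refers only to lifting and extending morphisms along short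
exact sequences, so that it passes to the opposite category directly. -/
def LiftsAndExtends (A B : D) : Prop :=
  (∀ ⦃E Q : D⦄ (f : B ⟶ E) (g : E ⟶ Q), IsSES f g → ∀ u : A ⟶ Q, ∃ l : A ⟶ E, l ≫ g = u) ∧
  (∀ ⦃K E : D⦄ (f : K ⟶ E) (g : E ⟶ A), IsSES f g → ∀ u : K ⟶ B, ∃ l : E ⟶ B, f ≫ l = u)

lemma LiftsAndExtends.op {A B : D} (h : LiftsAndExtends A B) :
    LiftsAndExtends (Opposite.op B) (Opposite.op A) := by
  constructor
  · intro E Q f g hs u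
    obtain ⟨l, hl⟩ := h.2 _ _ hs.unop u.unop
    exact ⟨l.op, Quiver.Hom.unop_inj hl⟩
  · intro K E f g hs u
    obtain ⟨l, hl⟩ := h.1 _ _ hs.unop u.unop
    exact ⟨l.op, Quiver.Hom.unop_inj hl⟩

/-- The left half of the balanced pair. Stated with `LiftsAndExtends` instead of `Ext`, so that
the right half is this result in the opposite category. -/
lemma hasBalancedRes_of_resHat {X ω ν Y : Set D} (h0 : ∃ Z ∈ X, IsZero Z)
    (hX : ExtensionClosed X) (hω : RelCogenerator ω X) (hν : RelGenerator ν Y)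
    (e1 : ∀ A ∈ X, ∀ H ∈ ResHat ω, LiftsAndExtends A H)
    (e2 : ∀ M ∈ ResHat X, ∀ V ∈ ν, LiftsAndExtends M V)
    (e3 : ∀ H ∈ ResHat ω, ∀ B ∈ Y, LiftsAndExtends H B)
    (M : D) (hM : M ∈ ResHat X) : HasBalancedRes X Y M := by
  obtain ⟨Z, hZ, hZ0⟩ := h0
  have step : ∀ {K A N : D}, K ∈ ResHat ω → A ∈ X → N ∈ ResHat X → ∀ (f : K ⟶ A) (g : A ⟶ N),
      IsSES f g → HasBalancedRes X Y K → HasBalancedRes X Y N := by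
    intro K A N hK hA hN f g hs hres
    refine hres.splice hA hs (fun Q hQ => (e1 Q hQ K hK).1 f g hs) fun B hB u => ?_
    -- Lift `u` to the `ν`-cover of `B`, and extend the lift along `f`.
    obtain ⟨V, hV, N', hN', i, p, hp⟩ := hν.2 B hB
    obtain ⟨l, hl⟩ := (e3 K hK N' hN').1 i p hp u
    obtain ⟨m, hm⟩ := (e2 N hN V hV).2 f g hs l
    exact ⟨m ≫ p, by rw [← Category.assoc, hm, hl]⟩
  have hatω : ∀ n, ∀ H ∈ ResDimLE ω n, HasBalancedRes X Y H := by
    intro n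
    induction n with
    | zero => exact fun H hH => hasBalancedRes_of_mem Y hZ hZ0 (hω.1 hH)
    | succ n ih =>
      intro H hH
      have hH' : H ∈ ResHat X := ⟨n + 1, resDimLE_mono hω.1 _ hH⟩
      obtain ⟨K, hK, W, hW, f, g, hs⟩ := hH
      exact step ⟨n, hK⟩ (hω.1 hW) hH' f g hs (ih K hK)
  obtain ⟨_ | n, hn⟩ := hM
  · exact hasBalancedRes_of_mem Y hZ hZ0 hn
  · obtain ⟨H, hH, Q, hQ, f, g, hs⟩ := exists_approx hX hω n M hn
    exact step ⟨n, hH⟩ hQ ⟨n + 1, hn⟩ f g hs (hatω n H hH)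

/-! ### Passage to the opposite category -/

/-- The class in `Dᵒᵖ` corresponding to a class in `D`. -/
def opClass (X : Set D) : Set Dᵒᵖ := {A | A.unop ∈ X}

lemma resDimLE_opClass {X : Set D} (n : ℕ) :
    ∀ M : Dᵒᵖ, M ∈ ResDimLE (opClass X) n ↔ M.unop ∈ CoresDimLE X n := by
  induction n with
  | zero => exact fun M => Iff.rfl
  | succ n ih =>
    intro M
    constructor
    · rintro ⟨K, hK, A, hA, f, g, hs⟩
      exact ⟨A.unop, hA, K.unop, (ih K).1 hK, g.unop, f.unop, hs.unop⟩
    · rintro ⟨A, hA, K, hK, f, g, hs⟩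
      exact ⟨Opposite.op K, (ih _).2 hK, Opposite.op A, hA, g.op, f.op, hs.op⟩

lemma mem_resHat_opClass {X : Set D} (M : Dᵒᵖ) :
    M ∈ ResHat (opClass X) ↔ M.unop ∈ CoresVee X :=
  exists_congr fun n => resDimLE_opClass n M

lemma RelGenerator.op {ν Y : Set D} (h : RelGenerator ν Y) :
    RelCogenerator (opClass ν) (opClass Y) := by
  refine ⟨fun A hA => h.1 hA, fun M hM => ?_⟩
  obtain ⟨V, hV, N, hN, f, g, hs⟩ := h.2 _ hM
  exact ⟨Opposite.op V, hV, Opposite.op N, hN, g.op, f.op, hs.op⟩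

lemma RelCogenerator.op {ω X : Set D} (h : RelCogenerator ω X) :
    RelGenerator (opClass ω) (opClass X) := by
  refine ⟨fun A hA => h.1 hA, fun M hM => ?_⟩
  obtain ⟨V, hV, N, hN, f, g, hs⟩ := h.2 _ hM
  exact ⟨Opposite.op V, hV, Opposite.op N, hN, g.op, f.op, hs.op⟩

lemma ExtensionClosed.op {X : Set D} (h : ExtensionClosed X) : ExtensionClosed (opClass X) :=
  fun _ _ _ f g hA hB hs => h g.unop f.unop hB hA hs.unop

lemma HasBalancedRes.unop {X Y : Set D} {N : D}
    (h : HasBalancedRes (opClass Y) (opClass X) (Opposite.op N)) :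
    ∃ S : RightRes N, S.InClass Y ∧ S.IsProper Y ∧ S.IsCoacyclic X := by
  obtain ⟨R, hR, hP, hC⟩ := h
  refine ⟨{ obj := fun n => (R.obj n).unop
            d := fun n => (R.d n).unop
            aug := R.aug.unop
            dd := fun n => Quiver.Hom.op_inj (R.dd n)
            daug := Quiver.Hom.op_inj R.daug }, hR, ?_, ?_⟩
  · intro B hB
    obtain ⟨p1, p2, p3⟩ := hP (Opposite.op B) hB
    refine ⟨fun f => ?_, fun u hu => ?_, fun n u hu => ?_⟩
    · obtain ⟨g, hg⟩ := p1 f.op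
      exact ⟨g.unop, Quiver.Hom.op_inj hg⟩
    · obtain ⟨g, hg⟩ := p2 u.op (Quiver.Hom.unop_inj hu)
      exact ⟨g.unop, Quiver.Hom.op_inj hg⟩
    · obtain ⟨g, hg⟩ := p3 n u.op (Quiver.Hom.unop_inj hu)
      exact ⟨g.unop, Quiver.Hom.op_inj hg⟩
  · intro A hA
    obtain ⟨c1, c2, c3⟩ := hC (Opposite.op A) hA
    refine ⟨fun u hu => ?_, fun u hu => ?_, fun n u hu => ?_⟩
    · exact Quiver.Hom.op_inj (c1 u.op (Quiver.Hom.unop_inj hu))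
    · obtain ⟨g, hg⟩ := c2 u.op (Quiver.Hom.unop_inj hu)
      exact ⟨g.unop, Quiver.Hom.op_inj hg⟩
    · obtain ⟨g, hg⟩ := c3 n u.op (Quiver.Hom.unop_inj hu)
      exact ⟨g.unop, Quiver.Hom.op_inj hg⟩

/-! ### Vanishing of Ext -/

section Ext

variable [HasExt.{w} D]

lemma ExtZero.liftsAndExtends {A B : D} (h : ExtZero.{w} A B 1) : LiftsAndExtends A B := by
  have : Subsingleton (Abelian.Ext.{w} A B 1) := h
  constructor
  · rintro E Q f g ⟨w, hs⟩ u
    obtain ⟨x, hx⟩ := Abelian.Ext.covariant_sequence_exact₃ A hs (Abelian.Ext.mk₀ u) (zero_add 1)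
      (Subsingleton.elim _ _)
    obtain ⟨l, rfl⟩ := (Abelian.Ext.mk₀_bijective _ _).2 x
    rw [Abelian.Ext.mk₀_comp_mk₀] at hx
    exact ⟨l, (Abelian.Ext.mk₀_bijective _ _).1 hx⟩
  · rintro K E f g ⟨w, hs⟩ u
    obtain ⟨x, hx⟩ := Abelian.Ext.contravariant_sequence_exact₁ hs B (Abelian.Ext.mk₀ u)
      (add_zero 1) (Subsingleton.elim _ _)
    obtain ⟨l, rfl⟩ := (Abelian.Ext.mk₀_bijective _ _).2 x
    rw [Abelian.Ext.mk₀_comp_mk₀] at hx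
    exact ⟨l, (Abelian.Ext.mk₀_bijective _ _).1 hx⟩

/-- Dimension shifting in the second variable. -/
lemma extZero_resDimLE {A : D} {ω : Set D}
    (h : ∀ W ∈ ω, ∀ i : ℕ, 1 ≤ i → ExtZero.{w} A W i) (n : ℕ) :
    ∀ H ∈ ResDimLE ω n, ∀ i : ℕ, 1 ≤ i → ExtZero.{w} A H i := by
  induction n with
  | zero => exact h
  | succ n ih =>
    rintro H ⟨K, hK, W, hW, f, g, w, hs⟩ i hi
    have h1 : Subsingleton (Abelian.Ext.{w} A K (i + 1)) := ih K hK (i + 1) (by omega)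
    have h2 : Subsingleton (Abelian.Ext.{w} A W i) := h W hW i hi
    refine subsingleton_of_forall_eq 0 fun x => ?_
    obtain ⟨y, hy⟩ := Abelian.Ext.covariant_sequence_exact₃ A hs x rfl (h1.elim _ _)
    rw [← hy, h2.elim y 0, Abelian.Ext.zero_comp]

/-- Dimension shifting in the first variable. -/
lemma extZero_coresDimLE {B : D} {ν : Set D}
    (h : ∀ V ∈ ν, ∀ i : ℕ, 1 ≤ i → ExtZero.{w} V B i) (n : ℕ) :
    ∀ L ∈ CoresDimLE ν n, ∀ i : ℕ, 1 ≤ i → ExtZero.{w} L B i := by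
  induction n with
  | zero => exact h
  | succ n ih =>
    rintro L ⟨V, hV, K, hK, f, g, w, hs⟩ i hi
    have h1 : Subsingleton (Abelian.Ext.{w} K B (1 + i)) := ih K hK (1 + i) (by omega)
    have h2 : Subsingleton (Abelian.Ext.{w} V B i) := h V hV i hi
    refine subsingleton_of_forall_eq 0 fun x => ?_
    obtain ⟨y, hy⟩ := Abelian.Ext.contravariant_sequence_exact₁ hs B x rfl (h1.elim _ _)
    rw [← hy, h2.elim y 0, Abelian.Ext.comp_zero]

end Ext

end BalancedSystems

open BalancedSystems in
/-- If `[(X,ω);(ν,Y)]` is a finite balanced system, then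
`(X,Y)` is a balanced pair with respect to `(X^∧, Y^∨)`. -/
theorem statement11 {C : Type u} [Category.{v} C] [Abelian C] [HasExt.{w} C]
    (𝒳 ω ν 𝒴 : Set C)
    (h1 : IsoClosed 𝒳) (h2 : IsoClosed ω) (h3 : IsoClosed ν) (h4 : IsoClosed 𝒴)
    (hfbs : IsFiniteBalancedSystem.{w} 𝒳 ω ν 𝒴) :
    IsBalancedPair 𝒳 𝒴 (ResHat 𝒳) (CoresVee 𝒴) := by
  have left : ∀ M ∈ ResHat 𝒳, HasBalancedRes 𝒳 𝒴 M :=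
    hasBalancedRes_of_resHat ⟨_, hfbs.pointedX, isZero_zero C⟩ hfbs.extClosedX
      hfbs.relCogenOmega hfbs.relGenNu
      (fun A hA H ⟨n, hH⟩ =>
        (extZero_resDimLE (hfbs.idXomega A hA) n H hH 1 le_rfl).liftsAndExtends)
      (fun M hM V hV => (hfbs.ext1_hatX_nu M hM V hV).liftsAndExtends)
      (fun H hH B hB => (hfbs.ext1_hatOmega_Y H hH B hB).liftsAndExtends)
  have right : ∀ N ∈ CoresVee 𝒴,
      ∃ S : RightRes N, S.InClass 𝒴 ∧ S.IsProper 𝒴 ∧ S.IsCoacyclic 𝒳 := by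
    refine fun N hN => HasBalancedRes.unop (hasBalancedRes_of_resHat
      (ω := opClass ν) (ν := opClass ω) ⟨Opposite.op _, hfbs.pointedY, (isZero_zero C).op⟩
      hfbs.extClosedY.op hfbs.relGenNu.op hfbs.relCogenOmega.op ?_ ?_ ?_ _
      ((mem_resHat_opClass _).2 hN))
    · intro B hB L hL
      obtain ⟨n, hn⟩ := (mem_resHat_opClass L).1 hL
      exact (extZero_coresDimLE (fun V hV => hfbs.pdYnu V hV _ hB) n _ hn 1
        le_rfl).liftsAndExtends.op
    · intro M hM W hW
      exact (hfbs.ext1_omega_veeY _ hW _ ((mem_resHat_opClass M).1 hM)).liftsAndExtends.op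
    · intro L hL A hA
      exact (hfbs.ext1_X_veeNu _ hA _ ((mem_resHat_opClass L).1 hL)).liftsAndExtends.op
  refine ⟨fun M hM => ⟨0, hM⟩, fun M hM => ?_, fun N hN => ⟨0, hN⟩, fun N hN => ?_, left, right⟩
  · obtain ⟨R, hR, hP, -⟩ := left M hM
    exact ⟨R, hR, hP⟩
  · obtain ⟨S, hS, hP, -⟩ := right N hN
    exact ⟨S, hS, hP⟩
end

section
/- Let X, X′, Y, ν be classes of objects in an abelian category A satisfying: (1) X is a relative quasi-generator in X′, i.e. every L ∈ X′ fits into a short exact sequence L′ ↪ X ↠ L with X ∈ X and L′ ∈ X′; (2) ν is a relative generator in Y; (3) Ext¹_A(L,V) = 0 for all L ∈ X′, V ∈ ν, and id_X(ν) = 0; (4) pd_Y(L) < ∞ for every L ∈ X′. Then id_{X′}(Y) = 0, i.e. Ext^i_A(L,Y) = 0 for all i ≥ 1, L ∈ X′ and Y ∈ Y. -/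
/-! The vanishing is obtained by two dimension shifts.

For `L ∈ X'` and `V ∈ ν`, all higher `Ext` groups vanish by induction on the degree: if
`L' ↪ A ↠ L` with `A ∈ 𝒳` and `L' ∈ X'`, then `Extⁱ(L', V)` surjects onto `Extⁱ⁺¹(L, V)` for
`i ≥ 1`, because `Extⁱ⁺¹(A, V) = 0`; the induction starts from `Ext¹(X', ν) = 0`.

For `B ∈ 𝒴`, choose `B' ↪ V ↠ B` with `V ∈ ν` and `B' ∈ 𝒴`. Since `Extⁱ(L, V) = 0`, the group
`Extⁱ(L, B)` embeds into `Extⁱ⁺¹(L, B')`. Repeating this with `L` fixed raises the degree past the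
relative projective dimension of `L`, where everything vanishes; as the bound on that dimension is
uniform over `𝒴`, descending induction on the degree applies. -/

open CategoryTheory CategoryTheory.Limits

universe w w' v u

/-! ### Dimension shifting -/

namespace BalancedSystems

open Abelian

variable {C : Type u} [Category.{v} C] [Abelian C] [HasExt.{w} C]

/-- Dimension shift in the first variable: `Extⁱ(L', V)` surjects onto `Extⁱ⁺¹(L, V)` as soon as
`Extⁱ⁺¹(A, V) = 0`. -/
lemma ExtZero.succ_of_ses_left {L' A L V : C} {f : L' ⟶ A} {g : A ⟶ L} (h : IsSES f g) {i : ℕ}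
    (hL' : ExtZero.{w} L' V i) (hA : ExtZero.{w} A V (i + 1)) : ExtZero.{w} L V (i + 1) := by
  obtain ⟨_, hS⟩ := h
  refine subsingleton_of_forall_eq 0 fun x => ?_
  obtain ⟨y, rfl⟩ := Ext.contravariant_sequence_exact₃ hS V x (hA.elim _ _) (add_comm 1 i)
  rw [show y = 0 from hL'.elim _ _, Ext.comp_zero]

/-- Dimension shift in the second variable: `Extⁱ(L, B)` embeds into `Extⁱ⁺¹(L, B')` as soon as
`Extⁱ(L, V) = 0`. -/
lemma ExtZero.of_ses_right {L B' V B : C} {f : B' ⟶ V} {g : V ⟶ B} (h : IsSES f g) {i : ℕ}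
    (hV : ExtZero.{w} L V i) (hB' : ExtZero.{w} L B' (i + 1)) : ExtZero.{w} L B i := by
  obtain ⟨_, hS⟩ := h
  refine subsingleton_of_forall_eq 0 fun x => ?_
  obtain ⟨y, rfl⟩ := Ext.covariant_sequence_exact₃ L hS x rfl (hB'.elim _ _)
  rw [show y = 0 from hV.elim _ _, Ext.zero_comp]

/-- `Ext¹(X', ν) = 0` and `id_𝒳(ν) = 0` together give `id_{X'}(ν) = 0`. -/
lemma extZero_of_relQuasiGenerator {𝒳 X' ν : Set C} (hqg : RelQuasiGenerator 𝒳 X')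
    (e1 : ∀ L ∈ X', ∀ V ∈ ν, ExtZero.{w} L V 1)
    (e2 : ∀ A ∈ 𝒳, ∀ V ∈ ν, ∀ i : ℕ, 1 ≤ i → ExtZero.{w} A V i) {V : C} (hV : V ∈ ν)
    {i : ℕ} (hi : 1 ≤ i) : ∀ L ∈ X', ExtZero.{w} L V i := by
  induction i, hi using Nat.le_induction with
  | base => exact fun L hL => e1 L hL V hV
  | succ i hi ih =>
    intro L hL
    obtain ⟨A, hA, L', hL', f, g, hS⟩ := hqg L hL
    exact .succ_of_ses_left hS (ih L' hL') (e2 A hA V hV _ (by omega))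

end BalancedSystems

open BalancedSystems in
/-- If `X` is a relative quasi-generator in `X′`, `ν` is a
relative generator in `Y`, `Ext¹(X′,ν) = 0`, `id_X(ν) = 0`, and every `L ∈ X′`
has finite projective dimension relative to `Y`, then `id_{X′}(Y) = 0`. -/
theorem statement12 {C : Type u} [Category.{v} C] [Abelian C] [HasExt.{w} C]
    (𝒳 X' 𝒴 ν : Set C)
    (h1 : IsoClosed 𝒳) (h2 : IsoClosed X') (h3 : IsoClosed 𝒴) (h4 : IsoClosed ν)
    (hqg : RelQuasiGenerator 𝒳 X')
    (hrg : RelGenerator ν 𝒴)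
    (e1 : ∀ L ∈ X', ∀ V ∈ ν, ExtZero.{w} L V 1)
    (e2 : ∀ A ∈ 𝒳, ∀ V ∈ ν, ∀ i : ℕ, 1 ≤ i → ExtZero.{w} A V i)
    (hfin : ∀ L ∈ X', ∃ n : ℕ, ∀ i : ℕ, n < i → ∀ B ∈ 𝒴, ExtZero.{w} L B i) :
    ∀ L ∈ X', ∀ B ∈ 𝒴, ∀ i : ℕ, 1 ≤ i → ExtZero.{w} L B i := by
  intro L hL
  obtain ⟨n, hn⟩ := hfin L hL
  -- Induction on `k`, a bound for the number of shifts taking degree `i` beyond `n`.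
  have key : ∀ k : ℕ, ∀ B ∈ 𝒴, ∀ i : ℕ, 1 ≤ i → n < i + k → ExtZero.{w} L B i := by
    intro k
    induction k with
    | zero => exact fun B hB i _ hk => hn i hk B hB
    | succ k ih =>
      intro B hB i hi hk
      obtain ⟨V, hV, B', hB', f, g, hS⟩ := hrg.2 B hB
      exact .of_ses_right hS (extZero_of_relQuasiGenerator hqg e1 e2 hV hi L hL)
        (ih B' hB' (i + 1) (by omega) (by omega))
  exact fun B hB i hi => key n B hB i hi (by omega)
end

section
/- Let (X₁,Y₁) and (X₂,Y₂) be hereditary complete cotorsion pairs in an abelian category A satisfying X₁ ∩ Y₁ = X₂ ∩ Y₂ =: ω. Then the following are equivalent: (a) [(X₁,ω);(ω,Y₁)] is a strongly finite balanced system; (b) [(X₂,ω);(ω,Y₂)] is a strongly finite balanced system; (c) Ext¹_A(ω,ω^∨) = 0 and Ext¹_A(ω^∧,ω) = 0. -/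
/-!
Fix a complete hereditary cotorsion pair `(X, Y)` with core `ω = X ∩ Y`. It is shown that
`[(X, ω); (ω, Y)]` is a strongly finite balanced system if and only if `Ext¹(ω, ω^∨) = 0` and
`Ext¹(ω^∧, ω) = 0`. This condition mentions only `ω`, so two such pairs with the same core give
equivalent conditions; `strongly_balanced_iff` is thus the whole content of the theorem.

The forward implication only restricts the vanishing conditions, because `ω ⊆ X` and `ω ⊆ Y`.
For the converse, closure under extensions, the relative (co)generator conditions and the
vanishing of `Extⁱ(X, Y)` come directly from the cotorsion pair. The four `Ext¹` conditions on
classes of finite dimension form two dual pairs, and one pair is obtained as follows.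

* `ext_hat_core_right`: `Extⁱ(ω^∧, Y) = 0` for `i ≥ 1`. Induct on the `ω`-dimension of `H`, with
  `K ↪ W ↠ H` and `W ∈ ω`. For `i ≥ 2` shift to `K`. For `i = 1` write `B ∈ Y` as a quotient of
  some `V ∈ ω` with kernel `B' ∈ Y`; then `Ext¹(H, V) = 0` embeds `Ext¹(H, B)` into
  `Ext²(H, B') = 0`.
* `ext_hat_left_core`: `Ext¹(X^∧, ω) = 0`. Embed `M ∈ X^∧` in some `B ∈ Y` with cokernel in `X`.
  Then `Extⁱ(B, Y) = 0` for large `i`, so `B ∈ ω^∧` by dimension shifting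
  (`mem_resDim_core_of_ext`), and `Ext¹(M, ω)` lies between `Ext¹(B, ω) = 0` and
  `Ext²(X, ω) = 0`.
-/

open CategoryTheory CategoryTheory.Limits

universe w w' v u

namespace BalancedSystems

/-! ### Vanishing of Ext along short exact sequences -/

section ExtSequences

variable {C : Type u} [Category.{v} C] [Abelian C] [HasExt.{w} C]

theorem extZero_iff {A B : C} {i : ℕ} :
    ExtZero.{w} A B i ↔ ∀ x : Abelian.Ext.{w} A B i, x = 0 :=
  subsingleton_iff_forall_eq 0

variable {A B E : C} {f : A ⟶ B} {g : B ⟶ E}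

theorem extZero_contra_mid (h : IsSES f g) {N : C} {i : ℕ} (hA : ExtZero.{w} A N i)
    (hE : ExtZero.{w} E N i) : ExtZero.{w} B N i := by
  obtain ⟨_, hS⟩ := h
  rw [extZero_iff] at *
  intro x
  obtain ⟨y, hy⟩ := Abelian.Ext.contravariant_sequence_exact₂ hS N x (hA _)
  rw [← hy, hE y, Abelian.Ext.comp_zero]

theorem extZero_contra_left (h : IsSES f g) {N : C} {i : ℕ} (hB : ExtZero.{w} B N i)
    (hE : ExtZero.{w} E N (i + 1)) : ExtZero.{w} A N i := by
  obtain ⟨_, hS⟩ := h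
  rw [extZero_iff] at *
  intro x
  obtain ⟨y, hy⟩ := Abelian.Ext.contravariant_sequence_exact₁ hS N x (Nat.add_comm 1 i) (hE _)
  rw [← hy, hB y, Abelian.Ext.comp_zero]

theorem extZero_contra_right (h : IsSES f g) {N : C} {i : ℕ} (hA : ExtZero.{w} A N i)
    (hB : ExtZero.{w} B N (i + 1)) : ExtZero.{w} E N (i + 1) := by
  obtain ⟨_, hS⟩ := h
  rw [extZero_iff] at *
  intro x
  obtain ⟨y, hy⟩ := Abelian.Ext.contravariant_sequence_exact₃ hS N x (hB _) (Nat.add_comm 1 i)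
  rw [← hy, hA y, Abelian.Ext.comp_zero]

theorem extZero_co_mid (h : IsSES f g) {M : C} {i : ℕ} (hA : ExtZero.{w} M A i)
    (hE : ExtZero.{w} M E i) : ExtZero.{w} M B i := by
  obtain ⟨_, hS⟩ := h
  rw [extZero_iff] at *
  intro x
  obtain ⟨y, hy⟩ := Abelian.Ext.covariant_sequence_exact₂ M hS x (hE _)
  rw [← hy, hA y, Abelian.Ext.zero_comp]

theorem extZero_co_right (h : IsSES f g) {M : C} {i : ℕ} (hB : ExtZero.{w} M B i)
    (hA : ExtZero.{w} M A (i + 1)) : ExtZero.{w} M E i := by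
  obtain ⟨_, hS⟩ := h
  rw [extZero_iff] at *
  intro x
  obtain ⟨y, hy⟩ := Abelian.Ext.covariant_sequence_exact₃ M hS x rfl (hA _)
  rw [← hy, hB y, Abelian.Ext.zero_comp]

theorem extZero_co_left (h : IsSES f g) {M : C} {i : ℕ} (hE : ExtZero.{w} M E i)
    (hB : ExtZero.{w} M B (i + 1)) : ExtZero.{w} M A (i + 1) := by
  obtain ⟨_, hS⟩ := h
  rw [extZero_iff] at *
  intro x
  obtain ⟨y, hy⟩ := Abelian.Ext.covariant_sequence_exact₁ M hS x (hB _) rfl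
  rw [← hy, hE y, Abelian.Ext.zero_comp]

open ZeroObject in
theorem extZero_zero_left (N : C) (i : ℕ) : ExtZero.{w} (0 : C) N i := by
  rw [extZero_iff]
  intro x
  rw [← Abelian.Ext.mk₀_id_comp x, (isZero_zero C).eq_of_src (𝟙 (0 : C)) 0,
    Abelian.Ext.mk₀_zero, Abelian.Ext.zero_comp]

open ZeroObject in
theorem extZero_zero_right (M : C) (i : ℕ) : ExtZero.{w} M (0 : C) i := by
  rw [extZero_iff]
  intro x
  rw [← Abelian.Ext.comp_mk₀_id x, (isZero_zero C).eq_of_src (𝟙 (0 : C)) 0,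
    Abelian.Ext.mk₀_zero, Abelian.Ext.comp_zero]

end ExtSequences

section Cotorsion

variable {C : Type u} [Category.{v} C] [Abelian C]

variable [HasExt.{w} C] {X Y : Set C}

/-! ### Structure of a cotorsion pair and its core -/

namespace IsCompleteHereditaryCotorsionPair

variable (hcp : IsCompleteHereditaryCotorsionPair.{w} X Y)

include hcp

theorem ext {A B : C} (hA : A ∈ X) (hB : B ∈ Y) {i : ℕ} (hi : 1 ≤ i) : ExtZero.{w} A B i :=
  hcp.2.2.2.2 A hA B hB i hi

theorem pointed_left : Pointed X :=
  (hcp.1 _).2 fun B _ => extZero_zero_left B 1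

theorem pointed_right : Pointed Y :=
  (hcp.2.1 _).2 fun A _ => extZero_zero_right A 1

theorem extensionClosed_left : ExtensionClosed X := fun _ _ _ _ _ hA hB hs =>
  (hcp.1 _).2 fun _ hN => extZero_contra_mid hs (hcp.ext hA hN le_rfl) (hcp.ext hB hN le_rfl)

theorem extensionClosed_right : ExtensionClosed Y := fun _ _ _ _ _ hA hB hs =>
  (hcp.2.1 _).2 fun _ hM => extZero_co_mid hs (hcp.ext hM hA le_rfl) (hcp.ext hM hB le_rfl)

/-- A special `Y`-preenvelope of an object of `X` has its middle term in the core, since `X` is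
closed under extensions. -/
theorem relCogenerator_core : RelCogenerator (X ∩ Y) X := by
  refine ⟨Set.inter_subset_left, fun M hM => ?_⟩
  obtain ⟨B, hB, Q, hQ, f, g, hs⟩ := hcp.2.2.2.1 M
  exact ⟨B, ⟨hcp.extensionClosed_left f g hM hQ hs, hB⟩, Q, hQ, f, g, hs⟩

theorem relGenerator_core : RelGenerator (X ∩ Y) Y := by
  refine ⟨Set.inter_subset_right, fun N hN => ?_⟩
  obtain ⟨K, hK, A, hA, f, g, hs⟩ := hcp.2.2.1 N
  exact ⟨A, ⟨hA, hcp.extensionClosed_right f g hK hN hs⟩, K, hK, f, g, hs⟩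

/-! ### Finite dimension and vanishing of Ext -/

theorem ext_of_mem_resDim {B : C} (hB : B ∈ Y) :
    ∀ (n : ℕ) {M : C}, M ∈ ResDimLE X n → ∀ i, n < i → ExtZero.{w} M B i
  | 0, _, hM, i, hi => hcp.ext hM hB hi
  | n + 1, _, ⟨_, hK, _, hA, _, _, hs⟩, i + 1, hi =>
    extZero_contra_right hs (ext_of_mem_resDim hB n hK i (by omega))
      (hcp.ext hA hB (by omega))

theorem ext_of_mem_coresDim {A : C} (hA : A ∈ X) :
    ∀ (n : ℕ) {N : C}, N ∈ CoresDimLE Y n → ∀ i, n < i → ExtZero.{w} A N i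
  | 0, _, hN, i, hi => hcp.ext hA hN hi
  | n + 1, _, ⟨_, hB, _, hK, _, _, hs⟩, i + 1, hi =>
    extZero_co_left hs (ext_of_mem_coresDim hA n hK i (by omega))
      (hcp.ext hA hB (by omega))

/-- An object of `Y` whose groups `Extⁱ(-, Y)` vanish for `i > n` has `ω`-resolution dimension at
most `n`: the kernels of successive covers by objects of `ω` stay in `Y`, and the `n`-th one
lies in `X`. -/
theorem mem_resDim_core_of_ext :
    ∀ (n : ℕ) {B : C}, B ∈ Y → (∀ N ∈ Y, ∀ i, n < i → ExtZero.{w} B N i) →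
      B ∈ ResDimLE (X ∩ Y) n
  | 0, _, hB, h => ⟨(hcp.1 _).2 fun N hN => h N hN 1 one_pos, hB⟩
  | n + 1, B, hB, h => by
    obtain ⟨V, hV, B', hB', f, g, hs⟩ := hcp.relGenerator_core.2 B hB
    refine ⟨B', mem_resDim_core_of_ext n hB' fun N hN i hi => ?_, V, hV, f, g, hs⟩
    exact extZero_contra_left hs (hcp.ext hV.1 hN (by omega)) (h N hN _ (by omega))

theorem mem_coresDim_core_of_ext :
    ∀ (n : ℕ) {A : C}, A ∈ X → (∀ M ∈ X, ∀ i, n < i → ExtZero.{w} M A i) →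
      A ∈ CoresDimLE (X ∩ Y) n
  | 0, _, hA, h => ⟨hA, (hcp.2.1 _).2 fun M hM => h M hM 1 one_pos⟩
  | n + 1, A, hA, h => by
    obtain ⟨V, hV, A', hA', f, g, hs⟩ := hcp.relCogenerator_core.2 A hA
    refine ⟨V, hV, A', mem_coresDim_core_of_ext n hA' fun M hM i hi => ?_, f, g, hs⟩
    exact extZero_co_right hs (hcp.ext hM hV.2 (by omega)) (h M hM _ (by omega))

/-! ### Consequences of the vanishing conditions on the core -/

theorem ext_hat_core_right
    (hc : ∀ H ∈ ResHat (X ∩ Y), ∀ W ∈ X ∩ Y, ExtZero.{w} H W 1) :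
    ∀ (n : ℕ) {H : C}, H ∈ ResDimLE (X ∩ Y) n → ∀ B ∈ Y, ∀ i, 1 ≤ i → ExtZero.{w} H B i
  | 0, _, hH, _, hB, _, hi => hcp.ext hH.1 hB hi
  | n + 1, H, hH, B, hB, i, hi => by
    have hge : ∀ N ∈ Y, ∀ j, 1 ≤ j → ExtZero.{w} H N (j + 1) := fun N hN j hj => by
      obtain ⟨K, hK, W, hW, f, g, hs⟩ := hH
      exact extZero_contra_right hs (ext_hat_core_right hc n hK N hN j hj)
        (hcp.ext hW.1 hN (by omega))
    obtain rfl | hi' := hi.eq_or_lt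
    · obtain ⟨V, hV, B', hB', f, g, hs⟩ := hcp.relGenerator_core.2 B hB
      exact extZero_co_right hs (hc H ⟨n + 1, hH⟩ V hV) (hge B' hB' 1 le_rfl)
    · obtain ⟨j, rfl⟩ : ∃ j, i = j + 1 := ⟨i - 1, by omega⟩
      exact hge B hB j (by omega)

theorem ext_left_vee_core
    (hc : ∀ W ∈ X ∩ Y, ∀ N ∈ CoresVee (X ∩ Y), ExtZero.{w} W N 1) :
    ∀ (n : ℕ) {L : C}, L ∈ CoresDimLE (X ∩ Y) n → ∀ A ∈ X, ∀ i, 1 ≤ i → ExtZero.{w} A L i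
  | 0, _, hL, _, hA, _, hi => hcp.ext hA hL.2 hi
  | n + 1, L, hL, A, hA, i, hi => by
    have hge : ∀ M ∈ X, ∀ j, 1 ≤ j → ExtZero.{w} M L (j + 1) := fun M hM j hj => by
      obtain ⟨W, hW, K, hK, f, g, hs⟩ := hL
      exact extZero_co_left hs (ext_left_vee_core hc n hK M hM j hj)
        (hcp.ext hM hW.2 (by omega))
    obtain rfl | hi' := hi.eq_or_lt
    · obtain ⟨V, hV, A', hA', f, g, hs⟩ := hcp.relCogenerator_core.2 A hA
      exact extZero_contra_left hs (hc V hV L ⟨n + 1, hL⟩) (hge A' hA' 1 le_rfl)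
    · obtain ⟨j, rfl⟩ : ∃ j, i = j + 1 := ⟨i - 1, by omega⟩
      exact hge A hA j (by omega)

theorem ext_hat_left_core
    (hc : ∀ H ∈ ResHat (X ∩ Y), ∀ W ∈ X ∩ Y, ExtZero.{w} H W 1) {M W : C}
    (hM : M ∈ ResHat X) (hW : W ∈ X ∩ Y) : ExtZero.{w} M W 1 := by
  obtain ⟨n, hM⟩ := hM
  obtain ⟨B, hB, Q, hQ, f, g, hs⟩ := hcp.2.2.2.1 M
  have hB' : B ∈ ResDimLE (X ∩ Y) n := hcp.mem_resDim_core_of_ext n hB fun N hN i hi =>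
    extZero_contra_mid hs (hcp.ext_of_mem_resDim hN n hM i hi) (hcp.ext hQ hN (by omega))
  exact extZero_contra_left hs (hc B ⟨n, hB'⟩ W hW) (hcp.ext hQ hW.2 (by omega))

theorem ext_core_vee_right
    (hc : ∀ W ∈ X ∩ Y, ∀ N ∈ CoresVee (X ∩ Y), ExtZero.{w} W N 1) {W N : C}
    (hW : W ∈ X ∩ Y) (hN : N ∈ CoresVee Y) : ExtZero.{w} W N 1 := by
  obtain ⟨n, hN⟩ := hN
  obtain ⟨K, hK, A, hA, f, g, hs⟩ := hcp.2.2.1 N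
  have hA' : A ∈ CoresDimLE (X ∩ Y) n := hcp.mem_coresDim_core_of_ext n hA fun M hM i hi =>
    extZero_co_mid hs (hcp.ext hM hK (by omega)) (hcp.ext_of_mem_coresDim hM n hN i hi)
  exact extZero_co_right hs (hc W hW A ⟨n, hA'⟩) (hcp.ext hW.1 hK (by omega))

/-- Being a strongly finite balanced system depends only on the core of the cotorsion pair. -/
theorem strongly_balanced_iff :
    IsStronglyFiniteBalancedSystem.{w} X (X ∩ Y) (X ∩ Y) Y ↔
      ((∀ W ∈ X ∩ Y, ∀ N ∈ CoresVee (X ∩ Y), ExtZero.{w} W N 1) ∧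
        (∀ H ∈ ResHat (X ∩ Y), ∀ W ∈ X ∩ Y, ExtZero.{w} H W 1)) := by
  constructor
  · intro h
    exact ⟨fun W hW N hN => h.ext1_X_veeNu W hW.1 N hN,
      fun H hH W hW => h.ext1_hatOmega_Y H hH W hW.2⟩
  · rintro ⟨hvee, hhat⟩
    exact
      { pointedX := hcp.pointed_left
        extClosedX := hcp.extensionClosed_left
        pointedY := hcp.pointed_right
        extClosedY := hcp.extensionClosed_right
        relCogenOmega := hcp.relCogenerator_core
        idXomega := fun _ hA _ hW _ hi => hcp.ext hA hW.2 hi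
        relGenNu := hcp.relGenerator_core
        pdYnu := fun _ hV _ hB _ hi => hcp.ext hV.1 hB hi
        ext1_hatX_nu := fun _ hM _ hV => hcp.ext_hat_left_core hhat hM hV
        ext1_hatOmega_Y := fun _ ⟨n, hH⟩ B hB => hcp.ext_hat_core_right hhat n hH B hB 1 le_rfl
        ext1_omega_veeY := fun _ hW _ hN => hcp.ext_core_vee_right hvee hW hN
        ext1_X_veeNu := fun A hA _ ⟨n, hL⟩ => hcp.ext_left_vee_core hvee n hL A hA 1 le_rfl
        pdYomega := fun _ hW _ hB _ hi => hcp.ext hW.1 hB hi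
        idXnu := fun _ hA _ hV _ hi => hcp.ext hA hV.2 hi }

end IsCompleteHereditaryCotorsionPair

end Cotorsion

end BalancedSystems


open BalancedSystems in
/-- If `(X₁,Y₁)` and `(X₂,Y₂)` are hereditary complete
cotorsion pairs with `X₁ ∩ Y₁ = X₂ ∩ Y₂ =: ω`, then the following are
equivalent: (a) `[(X₁,ω);(ω,Y₁)]` is a strongly finite balanced system;
(b) `[(X₂,ω);(ω,Y₂)]` is a strongly finite balanced system;
(c) `Ext¹(ω,ω^∨) = 0` and `Ext¹(ω^∧,ω) = 0`. -/
theorem statement14 {C : Type u} [Category.{v} C] [Abelian C] [HasExt.{w} C]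
    (X₁ Y₁ X₂ Y₂ : Set C)
    (h1 : IsoClosed X₁) (h2 : IsoClosed Y₁) (h3 : IsoClosed X₂) (h4 : IsoClosed Y₂)
    (hcp₁ : IsCompleteHereditaryCotorsionPair.{w} X₁ Y₁)
    (hcp₂ : IsCompleteHereditaryCotorsionPair.{w} X₂ Y₂)
    (hω : X₁ ∩ Y₁ = X₂ ∩ Y₂) :
    (IsStronglyFiniteBalancedSystem.{w} X₁ (X₁ ∩ Y₁) (X₁ ∩ Y₁) Y₁ ↔
      IsStronglyFiniteBalancedSystem.{w} X₂ (X₁ ∩ Y₁) (X₁ ∩ Y₁) Y₂) ∧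
    (IsStronglyFiniteBalancedSystem.{w} X₁ (X₁ ∩ Y₁) (X₁ ∩ Y₁) Y₁ ↔
      ((∀ W ∈ X₁ ∩ Y₁, ∀ N ∈ CoresVee (X₁ ∩ Y₁), ExtZero.{w} W N 1) ∧
        (∀ H ∈ ResHat (X₁ ∩ Y₁), ∀ W ∈ X₁ ∩ Y₁, ExtZero.{w} H W 1))) := by
  refine ⟨?_, hcp₁.strongly_balanced_iff⟩
  rw [hcp₁.strongly_balanced_iff, hω]
  exact hcp₂.strongly_balanced_iff.symm
end
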